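/- Let (Ω, μ) be a probability space, T : Ω → Ω an ergodic measure-preserving transformation, and A : Ω → GL(d, ℝ) a measurable linear cocycle with ∫_Ω log⁺‖A(ω)‖ dμ(ω) < ∞. Then there exist an integer k ≥ 1, numbers λ₁ > λ₂ > ⋯ > λ_k with λ₁, …, λ_{k−1} ∈ ℝ and λ_k ∈ ℝ ∪ {−∞}, and for μ-almost every ω ∈ Ω a filtration of linear subspaces 0 ⊊ V_k(ω) ⊊ V_{k−1}(ω) ⊊ ⋯ ⊊ V_1(ω) = ℝ^d, measurable in ω, such that A(ω) V_i(ω) = V_i(Tω) for a.e. ω and every i, and for every vector v ∈ V_i(ω) \ V_{i+1}(ω) (with the convention V_{k+1}(ω) = 0), lim_{N→∞} (1/N) log ‖A^N(ω) v‖ = λ_i. -/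

import Mathlib

open MeasureTheory Filter Topology

/-- The operator norm of a square real matrix, with respect to Euclidean norms. -/
noncomputable def matOpNorm {d : ℕ} (M : Matrix (Fin d) (Fin d) ℝ) : ℝ :=
  ‖Matrix.toEuclideanCLM (𝕜 := ℝ) M‖

/-- The cocycle iterates `A^N(ω) = A(T^{N-1} ω) ⋯ A(T ω) A(ω)`. -/
noncomputable def cocycIter {Ω : Type*} {d : ℕ} (T : Ω → Ω)
    (A : Ω → Matrix (Fin d) (Fin d) ℝ) : ℕ → Ω → Matrix (Fin d) (Fin d) ℝ
  | 0, _ => 1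
  | n + 1, ω => cocycIter T A n (T ω) * A ω

section ErgodicTheorems

variable {Ω : Type*} {T : Ω → Ω}

/-- The running maximum `max (0, S₁ h, …, Sₙ h)` of the Birkhoff sums of `h`. -/
noncomputable def birkhoffMax (T : Ω → Ω) (h : Ω → ℝ) : ℕ → Ω → ℝ
  | 0, _ => 0
  | n + 1, ω => max 0 (h ω + birkhoffMax T h n (T ω))

theorem birkhoffMax_nonneg (h : Ω → ℝ) (n : ℕ) (ω : Ω) : 0 ≤ birkhoffMax T h n ω := by
  cases n with
  | zero => exact le_rfl
  | succ n => exact le_max_left _ _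

theorem birkhoffMax_le_succ (h : Ω → ℝ) (n : ℕ) (ω : Ω) :
    birkhoffMax T h n ω ≤ birkhoffMax T h (n + 1) ω := by
  induction n generalizing ω with
  | zero => exact birkhoffMax_nonneg h 1 ω
  | succ n ih => exact max_le_max le_rfl (by linarith [ih (T ω)])

theorem birkhoffSum_le_birkhoffMax (h : Ω → ℝ) (n : ℕ) (ω : Ω) :
    birkhoffSum T h n ω ≤ birkhoffMax T h n ω := by
  induction n generalizing ω with
  | zero => simp [birkhoffMax]
  | succ n ih =>
    rw [birkhoffSum_succ']
    exact le_max_of_le_right (by linarith [ih (T ω)])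

variable [MeasurableSpace Ω] {μ : Measure Ω}

theorem integrable_birkhoffMax (hT : MeasurePreserving T μ μ) {h : Ω → ℝ} (hh : Integrable h μ)
    (n : ℕ) : Integrable (birkhoffMax T h n) μ := by
  induction n with
  | zero => exact integrable_zero _ _ _
  | succ n ih => exact (integrable_zero _ _ _).sup (hh.add (hT.integrable_comp_of_integrable ih))

theorem ae_bddAbove_birkhoffSum (hT : Ergodic T μ) {h : Ω → ℝ}
    (hm : Measurable h) (hh : Integrable h μ) (hneg : ∫ ω, h ω ∂μ < 0) :
    ∀ᵐ ω ∂μ, ∃ C : ℕ, ∀ n, birkhoffSum T h n ω ≤ C := by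
  have hSm : ∀ n, Measurable (birkhoffSum T h n) := fun n =>
    Finset.measurable_sum _ fun k _ => hm.comp (hT.measurable.iterate k)
  set S : Set Ω := {ω | ∃ C : ℕ, ∀ n, birkhoffSum T h n ω ≤ C} with hS
  have hSmeas : MeasurableSet S := by
    simp only [hS, Set.ofPred_exists, Set.ofPred_forall]
    exact .iUnion fun C => .iInter fun n => measurableSet_le (hSm n) measurable_const
  have hinv : T ⁻¹' S = S := by
    ext ω
    simp only [hS, Set.mem_preimage, Set.mem_ofPred_eq]
    constructor
    · rintro ⟨C, hC⟩
      obtain ⟨D, hD⟩ := exists_nat_ge (max 0 (h ω + C))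
      refine ⟨D, fun n => ?_⟩
      cases n with
      | zero => simp
      | succ n =>
        rw [birkhoffSum_succ']
        linarith [hC n, le_max_right 0 (h ω + C)]
    · rintro ⟨C, hC⟩
      obtain ⟨D, hD⟩ := exists_nat_ge (C - h ω)
      refine ⟨D, fun n => ?_⟩
      have := hC (n + 1)
      rw [birkhoffSum_succ'] at this
      linarith
  rcases hT.toPreErgodic.ae_mem_or_ae_notMem hSmeas hinv with h1 | h1
  · exact h1
  · exfalso
    have key : Tendsto (fun n => ∫ ω, (birkhoffMax T h (n + 1) ω - birkhoffMax T h n (T ω)) ∂μ)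
        atTop (𝓝 (∫ ω, h ω ∂μ)) := by
      refine tendsto_integral_of_dominated_convergence (fun ω => |h ω|) (fun n => ?_) hh.abs
        (fun n => ?_) ?_
      · exact ((integrable_birkhoffMax hT.toMeasurePreserving hh (n + 1)).sub
          (hT.toMeasurePreserving.integrable_comp_of_integrable
            (integrable_birkhoffMax hT.toMeasurePreserving hh n))).aestronglyMeasurable
      · refine .of_forall fun ω => ?_
        have h0 := birkhoffMax_nonneg (T := T) h n (T ω)
        simp only [birkhoffMax, Real.norm_eq_abs]
        rw [abs_le]
        constructor
        · linarith [le_max_right 0 (h ω + birkhoffMax T h n (T ω)), neg_abs_le (h ω)]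
        · rw [sub_le_iff_le_add]
          exact max_le (by positivity) (by linarith [le_abs_self (h ω)])
      · filter_upwards [h1] with ω hω
        have hω' : T ω ∉ S := by rwa [← Set.mem_preimage, hinv]
        simp only [hS, Set.mem_ofPred_eq, not_exists, not_forall, not_le] at hω'
        obtain ⟨C, hC⟩ := exists_nat_ge (-h ω)
        obtain ⟨n, hn⟩ := hω' C
        refine tendsto_const_nhds.congr' ?_
        filter_upwards [eventually_ge_atTop n] with m hm
        have h2 : birkhoffMax T h n (T ω) ≤ birkhoffMax T h m (T ω) :=
          monotone_nat_of_le_succ (f := fun k => birkhoffMax T h k (T ω))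
            (fun k => birkhoffMax_le_succ h k (T ω)) hm
        have h3 := birkhoffSum_le_birkhoffMax (T := T) h n (T ω)
        simp only [birkhoffMax]
        rw [max_eq_right (by linarith)]
        ring
    have hge : ∀ n, 0 ≤ ∫ ω, (birkhoffMax T h (n + 1) ω - birkhoffMax T h n (T ω)) ∂μ := by
      intro n
      have hi := integrable_birkhoffMax hT.toMeasurePreserving hh n
      have hiT : Integrable (fun ω => birkhoffMax T h n (T ω)) μ :=
        hT.toMeasurePreserving.integrable_comp_of_integrable hi
      rw [integral_sub (integrable_birkhoffMax hT.toMeasurePreserving hh (n + 1)) hiT, sub_nonneg]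
      have : ∫ ω, birkhoffMax T h n (T ω) ∂μ = ∫ ω, birkhoffMax T h n ω ∂μ := by
        have h4 := integral_map (μ := μ) (φ := T) (f := birkhoffMax T h n) hT.measurable.aemeasurable
          (by rw [hT.map_eq]; exact hi.aestronglyMeasurable)
        rw [hT.map_eq] at h4
        exact h4.symm
      rw [this]
      exact integral_mono hi (integrable_birkhoffMax hT.toMeasurePreserving hh (n + 1))
        (birkhoffMax_le_succ h n)
    exact absurd (ge_of_tendsto' key hge) (not_le.mpr hneg)

theorem ae_eventually_birkhoffSum_le [IsProbabilityMeasure μ] (hT : Ergodic T μ) {g : Ω → ℝ}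
    (hm : Measurable g) (hg : Integrable g μ) {c : ℝ} (hc : ∫ ω, g ω ∂μ < c) :
    ∀ᵐ ω ∂μ, ∀ᶠ n : ℕ in atTop, birkhoffSum T g n ω ≤ c * n := by
  obtain ⟨b, hb, hbc⟩ := exists_between hc
  have h1 := ae_bddAbove_birkhoffSum hT (h := fun ω => g ω - b) (hm.sub_const b)
    (hg.sub (integrable_const b)) (by
      rw [integral_sub hg (integrable_const b)]
      simpa using hb)
  filter_upwards [h1] with ω ⟨C, hC⟩
  have hpos : 0 < c - b := by linarith
  obtain ⟨N, hN⟩ := exists_nat_ge (C / (c - b))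
  filter_upwards [eventually_ge_atTop N] with n hn
  have h2 := hC n
  have h3 : birkhoffSum T (fun ω => g ω - b) n ω = birkhoffSum T g n ω - n * b := by
    simp [birkhoffSum]
  have h4 : (C : ℝ) ≤ (c - b) * n := by
    have : (N : ℝ) ≤ n := by exact_mod_cast hn
    rw [div_le_iff₀ hpos] at hN
    nlinarith
  linarith

/-- **Birkhoff's pointwise ergodic theorem** for ergodic maps. -/
theorem ae_tendsto_birkhoffSum_div [IsProbabilityMeasure μ] (hT : Ergodic T μ) {g : Ω → ℝ}
    (hm : Measurable g) (hg : Integrable g μ) :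
    ∀ᵐ ω ∂μ, Tendsto (fun n : ℕ => birkhoffSum T g n ω / n) atTop (𝓝 (∫ ω, g ω ∂μ)) := by
  have hup : ∀ᵐ ω ∂μ, ∀ k : ℕ, ∀ᶠ n : ℕ in atTop,
      birkhoffSum T g n ω ≤ (∫ ω, g ω ∂μ + 1 / (k + 1)) * n :=
    ae_all_iff.mpr fun k => ae_eventually_birkhoffSum_le hT hm hg
      (lt_add_of_pos_right _ Nat.one_div_pos_of_nat)
  have hlo : ∀ᵐ ω ∂μ, ∀ k : ℕ, ∀ᶠ n : ℕ in atTop,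
      birkhoffSum T (fun ω => -g ω) n ω ≤ (-∫ ω, g ω ∂μ + 1 / (k + 1)) * n :=
    ae_all_iff.mpr fun k => ae_eventually_birkhoffSum_le hT hm.neg hg.neg (by
      rw [integral_neg']
      exact lt_add_of_pos_right _ Nat.one_div_pos_of_nat)
  filter_upwards [hup, hlo] with ω h1 h2
  rw [Metric.tendsto_nhds]
  intro ε hε
  obtain ⟨k, hk⟩ := exists_nat_one_div_lt hε
  filter_upwards [h1 k, h2 k, eventually_gt_atTop 0] with n hn1 hn2 hn
  have hn' : (0 : ℝ) < n := by exact_mod_cast hn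
  have h3 : birkhoffSum T (fun ω => -g ω) n ω = -birkhoffSum T g n ω := by
    simp [birkhoffSum]
  rw [h3] at hn2
  rw [Real.dist_eq, abs_lt]
  constructor
  · rw [lt_sub_iff_add_lt, lt_div_iff₀ hn']
    nlinarith
  · rw [sub_lt_iff_lt_add, div_lt_iff₀ hn']
    nlinarith

theorem ae_tendsto_birkhoffSum_tail_div [IsProbabilityMeasure μ] (hT : Ergodic T μ) {g : Ω → ℝ}
    (hm : Measurable g) (hg : Integrable g μ) (M : ℕ) :
    ∀ᵐ ω ∂μ, Tendsto (fun n : ℕ => (∑ j ∈ Finset.Ico (n - M) n, g (T^[j] ω)) / n) atTop (𝓝 0) := by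
  filter_upwards [ae_tendsto_birkhoffSum_div hT hm hg] with ω hω
  have h1 : Tendsto (fun n : ℕ => ((n - M : ℕ) : ℝ) / n) atTop (𝓝 1) := by
    have : Tendsto (fun n : ℕ => 1 - (M : ℝ) / n) atTop (𝓝 (1 - 0)) :=
      tendsto_const_nhds.sub (tendsto_const_div_atTop_nhds_zero_nat _)
    rw [sub_zero] at this
    refine this.congr' ?_
    filter_upwards [eventually_gt_atTop 0, eventually_ge_atTop M] with n hn hnM
    rw [Nat.cast_sub hnM, sub_div, div_self (by positivity)]
  have h2 := hω.sub ((hω.comp (tendsto_sub_atTop_nat M)).mul h1)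
  rw [mul_one, sub_self] at h2
  refine h2.congr' ?_
  filter_upwards [eventually_gt_atTop M] with n hn
  have hpos : ((n - M : ℕ) : ℝ) ≠ 0 := by
    exact_mod_cast (Nat.sub_pos_of_lt hn).ne'
  rw [Finset.sum_Ico_eq_sub _ (Nat.sub_le n M), Function.comp_apply, div_mul_div_cancel₀ hpos,
    ← sub_div]
  rfl

end ErgodicTheorems

section Kingman

variable {Ω : Type*} {T : Ω → Ω}

/-- Decomposing an orbit segment into blocks of length at most `M` on which `f` is nonpositive and
single steps at times in the exceptional set `B`. -/
theorem le_birkhoffSum_indicator_add_tail {f : ℕ → Ω → ℝ} {g : Ω → ℝ} {B : Set Ω} {M : ℕ}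
    (hg0 : ∀ ω, 0 ≤ g ω) (n : ℕ) (ω : Ω)
    (hsub : ∀ i m n, f (m + n) (T^[i] ω) ≤ f m (T^[i] ω) + f n (T^[m] (T^[i] ω)))
    (h0 : ∀ i, f 0 (T^[i] ω) ≤ 0) (h1 : ∀ i, f 1 (T^[i] ω) ≤ g (T^[i] ω))
    (hB : ∀ i, T^[i] ω ∉ B → ∃ m, 1 ≤ m ∧ m ≤ M ∧ f m (T^[i] ω) ≤ 0) :
    f n ω ≤ birkhoffSum T (B.indicator g) n ω + ∑ j ∈ Finset.Ico (n - M) n, g (T^[j] ω) := by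
  induction n using Nat.strong_induction_on generalizing ω with
  | _ n ih =>
  have hB0 : ∀ ω, 0 ≤ B.indicator g ω := fun ω => Set.indicator_nonneg (fun x _ => hg0 x) ω
  have shift : ∀ m, 1 ≤ m → m ≤ n → f n ω ≤ f m ω +
      (birkhoffSum T (B.indicator g) (n - m) (T^[m] ω) +
        ∑ j ∈ Finset.Ico (n - M) n, g (T^[j] ω)) := by
    intro m hm hmn
    have e1 := hsub 0 m (n - m)
    rw [Nat.add_sub_cancel' hmn] at e1
    have e2 := ih (n - m) (by omega) (T^[m] ω)
      (fun i => by simpa only [← Function.iterate_add_apply] using hsub (i + m))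
      (fun i => by simpa only [← Function.iterate_add_apply] using h0 (i + m))
      (fun i => by simpa only [← Function.iterate_add_apply] using h1 (i + m))
      (fun i => by simpa only [← Function.iterate_add_apply] using hB (i + m))
    have e3 : ∑ j ∈ Finset.Ico (n - m - M) (n - m), g (T^[j] (T^[m] ω))
        ≤ ∑ j ∈ Finset.Ico (n - M) n, g (T^[j] ω) := by
      simp only [← Function.iterate_add_apply]
      rw [Finset.sum_Ico_add' (fun j => g (T^[j] ω)) (n - m - M) (n - m) m]
      refine Finset.sum_le_sum_of_subset_of_nonneg (fun j hj => ?_) fun _ _ _ => hg0 _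
      simp only [Finset.mem_Ico] at hj ⊢
      omega
    simp only [Function.iterate_zero, id] at e1
    linarith
  rcases Nat.eq_zero_or_pos n with rfl | hn
  · simpa using h0 0
  by_cases hωB : ω ∈ B
  · have e1 := shift 1 le_rfl hn
    have e2 : birkhoffSum T (B.indicator g) n ω
        = g ω + birkhoffSum T (B.indicator g) (n - 1) (T ω) := by
      conv_lhs => rw [← Nat.sub_add_cancel hn]
      rw [birkhoffSum_succ', Set.indicator_of_mem hωB]
    have e3 := h1 0
    simp only [Function.iterate_zero, id, Function.iterate_one] at e1 e3
    linarith
  · obtain ⟨m, hm1, hmM, hm0⟩ := hB 0 hωB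
    simp only [Function.iterate_zero, id] at hm0
    by_cases hmn : m ≤ n
    · have e1 := shift m hm1 hmn
      have e2 : birkhoffSum T (B.indicator g) n ω = birkhoffSum T (B.indicator g) m ω
          + birkhoffSum T (B.indicator g) (n - m) (T^[m] ω) := by
        rw [← birkhoffSum_add, Nat.add_sub_cancel' hmn]
      have e3 : 0 ≤ birkhoffSum T (B.indicator g) m ω := Finset.sum_nonneg fun _ _ => hB0 _
      linarith
    · have e1 := shift 1 le_rfl hn
      have e4 : birkhoffSum T (B.indicator g) (n - 1) (T ω) ≤ birkhoffSum T (B.indicator g) n ω := by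
        conv_rhs => rw [← Nat.sub_add_cancel hn]
        rw [birkhoffSum_succ']
        linarith [hB0 ω]
      have hnM : n - M = 0 := by omega
      have e5 : ∀ k, ∀ i, f k (T^[i] ω) ≤ ∑ j ∈ Finset.Ico 0 k, g (T^[j + i] ω) := by
        intro k
        induction k with
        | zero => intro i; simpa using h0 i
        | succ k ihk =>
          intro i
          rw [Finset.sum_Ico_succ_top (Nat.zero_le k), Function.iterate_add_apply]
          have := hsub i k 1
          have h1' := h1 (k + i)
          rw [Function.iterate_add_apply] at h1'
          linarith [ihk i]
      have e6 := e5 n 0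
      rw [hnM]
      have e7 : 0 ≤ birkhoffSum T (B.indicator g) n ω := Finset.sum_nonneg fun _ _ => hB0 _
      simp only [Function.iterate_zero, id, add_zero] at e6
      linarith

variable [MeasurableSpace Ω] {μ : Measure Ω}

theorem ae_forall_iterate (hT : MeasurePreserving T μ μ) {p : Ω → Prop} (h : ∀ᵐ ω ∂μ, p ω) :
    ∀ᵐ ω ∂μ, ∀ n, p (T^[n] ω) :=
  ae_all_iff.mpr fun n => (hT.iterate n).quasiMeasurePreserving.ae h

theorem ae_eventually_le_of_subadditive [IsProbabilityMeasure μ] (hT : Ergodic T μ)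
    {f : ℕ → Ω → ℝ} {g : Ω → ℝ} (hfm : ∀ n, Measurable (f n))
    (hsub : ∀ᵐ ω ∂μ, ∀ m n, f (m + n) ω ≤ f m ω + f n (T^[m] ω))
    (h0 : ∀ᵐ ω ∂μ, f 0 ω ≤ 0) (hgm : Measurable g) (hg : Integrable g μ) (hg0 : ∀ ω, 0 ≤ g ω)
    (h1 : ∀ᵐ ω ∂μ, f 1 ω ≤ g ω) (hex : ∀ᵐ ω ∂μ, ∃ n, 1 ≤ n ∧ f n ω ≤ 0) {ε : ℝ} (hε : 0 < ε) :
    ∀ᵐ ω ∂μ, ∀ᶠ n : ℕ in atTop, f n ω ≤ ε * n := by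
  set B : ℕ → Set Ω := fun M => {ω | ∀ m, 1 ≤ m → m ≤ M → 0 < f m ω} with hBdef
  have hBm : ∀ M, MeasurableSet (B M) := fun M => by
    simp only [hBdef, Set.ofPred_forall]
    exact .iInter fun m => .iInter fun _ => .iInter fun _ => measurableSet_lt measurable_const (hfm m)
  have hlim : Tendsto (fun M => ∫ ω, (B M).indicator g ω ∂μ) atTop (𝓝 (∫ _, (0 : ℝ) ∂μ)) := by
    refine tendsto_integral_of_dominated_convergence g
      (fun M => (hgm.indicator (hBm M)).aestronglyMeasurable) hg (fun M => ?_) ?_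
    · refine .of_forall fun ω => ?_
      rw [Real.norm_of_nonneg (Set.indicator_nonneg (fun x _ => hg0 x) ω)]
      exact Set.indicator_le_self' (fun x _ => hg0 x) ω
    · filter_upwards [hex] with ω ⟨m, hm1, hm⟩
      refine tendsto_const_nhds.congr' ?_
      filter_upwards [eventually_ge_atTop m] with M hM
      exact (Set.indicator_of_notMem (fun h : ω ∈ B M =>
        absurd (h m hm1 hM) (not_lt.mpr hm)) g).symm
  rw [integral_zero] at hlim
  obtain ⟨M, hM⟩ := (hlim.eventually (gt_mem_nhds (half_pos hε))).exists
  filter_upwards [ae_forall_iterate hT.toMeasurePreserving hsub,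
    ae_forall_iterate hT.toMeasurePreserving h0, ae_forall_iterate hT.toMeasurePreserving h1,
    ae_eventually_birkhoffSum_le hT (hgm.indicator (hBm M)) (hg.indicator (hBm M)) hM,
    ae_tendsto_birkhoffSum_tail_div hT hgm hg M] with ω a1 a2 a3 a4 a5
  filter_upwards [a4, a5.eventually (gt_mem_nhds (half_pos hε)), eventually_gt_atTop 0]
    with n n1 n2 hn
  have hn' : (0 : ℝ) < n := by exact_mod_cast hn
  rw [div_lt_iff₀ hn'] at n2
  have key := le_birkhoffSum_indicator_add_tail (f := f) (B := B M) (M := M) hg0 n ω a1 a2 a3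
    (fun i hi => by
      simp only [hBdef, Set.mem_ofPred_eq, not_forall, not_lt] at hi
      obtain ⟨m, h1, h2, h3⟩ := hi
      exact ⟨m, h1, h2, h3⟩)
  linarith

/-- **Kingman's subadditive ergodic theorem** for ergodic maps; the limit may be `-∞`. -/
theorem exists_ae_tendsto_subadditive [IsProbabilityMeasure μ] (hT : Ergodic T μ)
    {f : ℕ → Ω → ℝ} {g : Ω → ℝ} (hfm : ∀ n, Measurable (f n))
    (hsub : ∀ᵐ ω ∂μ, ∀ m n, f (m + n) ω ≤ f m ω + f n (T^[m] ω))
    (h0 : ∀ᵐ ω ∂μ, f 0 ω ≤ 0) (hgm : Measurable g) (hg : Integrable g μ) (hg0 : ∀ ω, 0 ≤ g ω)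
    (h1 : ∀ᵐ ω ∂μ, f 1 ω ≤ g ω) :
    ∃ L : EReal, L ≠ ⊤ ∧
      ∀ᵐ ω ∂μ, Tendsto (fun n : ℕ => ((f n ω / n : ℝ) : EReal)) atTop (𝓝 L) := by
  -- whenever `liminf f n / n < c` on a set of positive measure, `limsup f n / n ≤ c` a.e.
  set F : Ω → EReal := fun ω => liminf (fun n : ℕ => ((f n ω / n : ℝ) : EReal)) atTop with hF
  have hFm : Measurable F := .liminf fun n => ((hfm n).div_const _).coe_real_ereal
  have hup : ∀ c : ℝ, (∀ᵐ ω ∂μ, F ω < c) → ∀ c' : ℝ, c < c' →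
      ∀ᵐ ω ∂μ, ∀ᶠ n : ℕ in atTop, ((f n ω / n : ℝ) : EReal) ≤ c' := by
    intro c hc c' hcc'
    have := ae_eventually_le_of_subadditive hT (f := fun n ω => f n ω - c * n)
      (g := fun ω => g ω + |c|) (fun n => (hfm n).sub_const _)
      (by filter_upwards [hsub] with ω hω m n; push_cast; linarith [hω m n])
      (by filter_upwards [h0] with ω hω; simpa using hω)
      (hgm.add_const _) (hg.add (integrable_const _)) (fun ω => add_nonneg (hg0 ω) (abs_nonneg c))
      (by filter_upwards [h1] with ω hω; push_cast; linarith [neg_abs_le c])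
      (by
        filter_upwards [hc] with ω hω
        obtain ⟨n, hn, hn1⟩ := ((frequently_lt_of_liminf_lt (by isBoundedDefault) hω).and_eventually
          (eventually_ge_atTop 1)).exists
        refine ⟨n, hn1, ?_⟩
        have hn' : (0 : ℝ) < n := by exact_mod_cast hn1
        rw [EReal.coe_lt_coe_iff, div_lt_iff₀ hn'] at hn
        linarith)
      (sub_pos.mpr hcc')
    filter_upwards [this] with ω hω
    filter_upwards [hω, eventually_gt_atTop 0] with n hn hn0
    have hn' : (0 : ℝ) < n := by exact_mod_cast hn0
    rw [EReal.coe_le_coe_iff, div_le_iff₀ hn']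
    linarith
  have hFT : ∀ᵐ ω ∂μ, F ω ≤ F (T ω) := by
    filter_upwards [hsub] with ω hω
    refine le_of_forall_gt fun c hc => ?_
    obtain ⟨b, hb1, hb2⟩ := EReal.lt_iff_exists_real_btwn.mp hc
    obtain ⟨a, ha1, ha2⟩ := EReal.lt_iff_exists_real_btwn.mp hb2
    rw [EReal.coe_lt_coe_iff] at ha1
    refine lt_of_le_of_lt ?_ ha2
    have hfr := frequently_lt_of_liminf_lt (by isBoundedDefault) hb1
    have hlim : Tendsto (fun n : ℕ => (f 1 ω + |b|) / (n + 1 : ℝ)) atTop (𝓝 0) := by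
      have := (tendsto_const_div_atTop_nhds_zero_nat (f 1 ω + |b|)).comp (tendsto_add_atTop_nat 1)
      refine this.congr fun n => ?_
      simp
    have hfr2 := hfr.and_eventually ((hlim.eventually (gt_mem_nhds (sub_pos.mpr ha1))).and
      (eventually_gt_atTop 0))
    refine liminf_le_of_frequently_le ?_ (by isBoundedDefault)
    refine Frequently.filter_mono ?_ (tendsto_add_atTop_nat 1)
    rw [frequently_map]
    refine hfr2.mono fun n ⟨n1, n2, hn0⟩ => ?_
    have hn' : (0 : ℝ) < n := by exact_mod_cast hn0
    rw [EReal.coe_lt_coe_iff, div_lt_iff₀ hn'] at n1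
    rw [div_lt_iff₀ (by positivity)] at n2
    rw [EReal.coe_le_coe_iff, div_le_iff₀ (by positivity)]
    have h4 := hω 1 n
    rw [add_comm 1 n, Function.iterate_one] at h4
    push_cast
    nlinarith [le_abs_self b, neg_abs_le b]
  have h01 : ∀ c : ℝ, (∀ᵐ ω ∂μ, F ω < c) ∨ ∀ᵐ ω ∂μ, ¬ F ω < c := by
    intro c
    have hs : MeasurableSet {ω | F ω < c} := measurableSet_lt hFm measurable_const
    rcases hT.ae_empty_or_univ_of_preimage_ae_le hs.nullMeasurableSet
      (hFT.mono fun ω hω (hω' : F (T ω) < c) => show F ω < c from hω.trans_lt hω') with h | h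
    · exact .inr (by simpa using ae_eq_empty.mp h |> measure_eq_zero_iff_ae_notMem.mp)
    · exact .inl (eventuallyEq_univ.mp h)
  have hFtop : ∃ c : ℝ, ∀ᵐ ω ∂μ, F ω < c := by
    by_contra! hcon
    have hall : ∀ᵐ ω ∂μ, ∀ c : ℕ, ¬ F ω < (c : ℝ) :=
      ae_all_iff.mpr fun c => (h01 c).resolve_left (by simpa using hcon c)
    have hle : ∀ᵐ ω ∂μ, F ω ≤ ((∫ ω, g ω ∂μ : ℝ) : EReal) := by
      filter_upwards [ae_tendsto_birkhoffSum_div hT hgm hg,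
        ae_forall_iterate hT.toMeasurePreserving hsub,
        ae_forall_iterate hT.toMeasurePreserving h1, h0] with ω a1 a2 a3 a4
      have hle : ∀ n, f n ω ≤ birkhoffSum T g n ω := by
        intro n
        induction n with
        | zero => simpa using a4
        | succ n ih =>
          have b1 := a2 0 n 1
          rw [birkhoffSum_succ]
          simp only [Function.iterate_zero, id] at b1
          linarith [a3 n]
      rw [hF, ← (EReal.tendsto_coe.mpr a1).liminf_eq]
      refine liminf_le_liminf (.of_forall fun n => ?_)
      rw [EReal.coe_le_coe_iff]
      exact div_le_div_of_nonneg_right (hle n) (Nat.cast_nonneg n)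
    obtain ⟨ω, b1, b2⟩ := (hall.and hle).exists
    obtain ⟨N, hN⟩ := exists_nat_gt (∫ ω, g ω ∂μ)
    exact b1 N (b2.trans_lt (by exact_mod_cast hN))
  set L := sInf {x : EReal | ∃ c : ℝ, x = c ∧ ∀ᵐ ω ∂μ, F ω < c} with hL
  have hLle : ∀ c : ℝ, (∀ᵐ ω ∂μ, F ω < c) → L ≤ c := fun c hc => sInf_le (by exact ⟨c, rfl, hc⟩)
  refine ⟨L, ?_, ?_⟩
  · obtain ⟨c, hc⟩ := hFtop
    exact ((hLle c hc).trans_lt (EReal.coe_lt_top c)).ne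
  have hupq : ∀ᵐ ω ∂μ, ∀ q : ℚ, L < ((q : ℝ) : EReal) →
      ∀ᶠ n : ℕ in atTop, ((f n ω / n : ℝ) : EReal) ≤ (q : ℝ) := by
    refine ae_all_iff.mpr fun q => ?_
    by_cases hq : L < ((q : ℝ) : EReal)
    · obtain ⟨x, ⟨c, rfl, hc⟩, hx⟩ := sInf_lt_iff.mp hq
      filter_upwards [hup c hc q (EReal.coe_lt_coe_iff.mp hx)] with ω hω _ using hω
    · exact .of_forall fun ω h => absurd h hq
  have hloq : ∀ᵐ ω ∂μ, ∀ q : ℚ, ((q : ℝ) : EReal) < L → ((q : ℝ) : EReal) ≤ F ω := by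
    refine ae_all_iff.mpr fun q => ?_
    by_cases hq : ((q : ℝ) : EReal) < L
    · have hnot : ¬ ∀ᵐ ω ∂μ, F ω < ((q : ℝ) : EReal) := fun h =>
        absurd (hLle q h) (not_le.mpr hq)
      filter_upwards [(h01 q).resolve_left hnot] with ω hω _ using not_lt.mp hω
    · exact .of_forall fun ω h => absurd h hq
  filter_upwards [hupq, hloq] with ω h1 h2
  refine tendsto_of_le_liminf_of_limsup_le ?_ ?_
  · refine le_of_forall_lt fun c hc => ?_
    obtain ⟨q, hq1, hq2⟩ := EReal.lt_iff_exists_rat_btwn.mp hc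
    exact hq1.trans_le (h2 q hq2)
  · refine le_of_forall_gt fun c hc => ?_
    obtain ⟨q, hq1, hq2⟩ := EReal.lt_iff_exists_rat_btwn.mp hc
    exact (limsup_le_of_le (by isBoundedDefault) (h1 q hq1)).trans_lt hq2

end Kingman

section Volume

open Module

open scoped InnerProductSpace

variable {E F : Type*} [NormedAddCommGroup E] [InnerProductSpace ℝ E]
  [NormedAddCommGroup F] [InnerProductSpace ℝ F]

/-- Singular value decomposition: some orthonormal basis has pairwise orthogonal images, ordered by
decreasing length. -/
theorem exists_orthonormalBasis_orthogonal_image [FiniteDimensional ℝ E] [FiniteDimensional ℝ F]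
    (X : F →ₗ[ℝ] E) {n : ℕ} (hn : finrank ℝ F = n) :
    ∃ b : OrthonormalBasis (Fin n) ℝ F, (∀ i j, i ≠ j → ⟪X (b i), X (b j)⟫_ℝ = 0) ∧
      Antitone fun i => ‖X (b i)‖ := by
  have hS : (X.adjoint ∘ₗ X).IsSymmetric := X.isPositive_adjoint_comp_self.isSymmetric
  have hinner : ∀ i j, ⟪X (hS.eigenvectorBasis hn i), X (hS.eigenvectorBasis hn j)⟫_ℝ
      = hS.eigenvalues hn i * ⟪hS.eigenvectorBasis hn i, hS.eigenvectorBasis hn j⟫_ℝ := by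
    intro i j
    rw [← LinearMap.adjoint_inner_left, ← LinearMap.comp_apply, hS.apply_eigenvectorBasis hn i]
    exact real_inner_smul_left _ _ _
  refine ⟨hS.eigenvectorBasis hn, fun i j hij => ?_, fun i j hij => ?_⟩
  · rw [hinner, (hS.eigenvectorBasis hn).inner_eq_zero hij, mul_zero]
  · have hsq : ∀ i, ‖X (hS.eigenvectorBasis hn i)‖ ^ 2 = hS.eigenvalues hn i := fun i => by
      rw [← real_inner_self_eq_norm_sq, hinner, (hS.eigenvectorBasis hn).inner_eq_one, mul_one]
    refine le_of_sq_le_sq ?_ (norm_nonneg _)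
    rw [hsq, hsq]
    exact hS.eigenvalues_antitone hn hij

theorem norm_sq_map_eq_sum {n : ℕ} (X : F →ₗ[ℝ] E) (b : OrthonormalBasis (Fin n) ℝ F)
    (hb : ∀ i j, i ≠ j → ⟪X (b i), X (b j)⟫_ℝ = 0) (v : F) :
    ‖X v‖ ^ 2 = ∑ i, ⟪b i, v⟫_ℝ ^ 2 * ‖X (b i)‖ ^ 2 := by
  conv_lhs => rw [← b.sum_repr' v, map_sum]
  rw [← real_inner_self_eq_norm_sq, sum_inner]
  refine Finset.sum_congr rfl fun i _ => ?_
  rw [inner_sum, Finset.sum_eq_single i]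
  · rw [map_smul, real_inner_smul_left, real_inner_smul_right, real_inner_self_eq_norm_sq]
    ring
  · intro j _ hj
    rw [map_smul, map_smul, real_inner_smul_left, real_inner_smul_right, hb i j hj.symm]
    ring
  · simp

/-- The squared volume of the parallelepiped spanned by `w`. -/
noncomputable def gramDet {q : ℕ} (w : Fin q → E) : ℝ := (Matrix.gram ℝ w).det

theorem gramDet_nonneg {q : ℕ} (w : Fin q → E) : 0 ≤ gramDet w :=
  (Matrix.posSemidef_gram ℝ w).det_nonneg

theorem gramDet_pos {q : ℕ} {w : Fin q → E} (hw : LinearIndependent ℝ w) : 0 < gramDet w :=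
  (Matrix.posDef_gram_of_linearIndependent hw).det_pos

theorem gramDet_eq_zero {q : ℕ} {w : Fin q → E} (hw : ¬ LinearIndependent ℝ w) :
    gramDet w = 0 := by
  by_contra h
  exact hw (Matrix.linearIndependent_of_det_gram_ne_zero h)

theorem gramDet_of_orthogonal {q : ℕ} {w : Fin q → E} (hw : ∀ i j, i ≠ j → ⟪w i, w j⟫_ℝ = 0) :
    gramDet w = ∏ i, ‖w i‖ ^ 2 := by
  have : Matrix.gram ℝ w = Matrix.diagonal fun i => ‖w i‖ ^ 2 := by
    ext i j
    rcases eq_or_ne i j with rfl | h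
    · simp
    · simp [h, hw i j h]
  rw [gramDet, this, Matrix.det_diagonal]

theorem gramDet_of_orthonormal {q : ℕ} {w : Fin q → E} (hw : Orthonormal ℝ w) :
    gramDet w = 1 := by
  rw [gramDet_of_orthogonal fun i j h => hw.2 h]
  simp [hw.1]

theorem gramDet_sum_smul {q : ℕ} (C : Matrix (Fin q) (Fin q) ℝ) (v : Fin q → E) :
    gramDet (fun i => ∑ j, C i j • v j) = C.det ^ 2 * gramDet v := by
  have : Matrix.gram ℝ (fun i => ∑ j, C i j • v j) = C * Matrix.gram ℝ v * C.transpose := by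
    ext i j
    simp only [Matrix.gram_apply, Matrix.mul_apply, Matrix.transpose_apply, sum_inner, inner_sum,
      real_inner_smul_left, real_inner_smul_right, Finset.sum_mul]
    refine Finset.sum_congr rfl fun k _ => Finset.sum_congr rfl fun l _ => ?_
    ring
  rw [gramDet, this, Matrix.det_mul, Matrix.det_mul, Matrix.det_transpose, gramDet]
  ring

theorem continuous_gramDet (q : ℕ) : Continuous (gramDet : (Fin q → E) → ℝ) := by
  unfold gramDet
  refine Continuous.matrix_det (continuous_matrix fun i j => ?_)
  exact (continuous_apply i).inner (continuous_apply j)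

/-- The largest factor by which `X` expands squared `q`-dimensional volumes. -/
noncomputable def volExp (q : ℕ) (X : E →L[ℝ] E) : ℝ :=
  sInf {K : ℝ | 0 ≤ K ∧ ∀ w : Fin q → E, gramDet (fun i => X (w i)) ≤ K * gramDet w}

theorem volExp_nonneg (q : ℕ) (X : E →L[ℝ] E) : 0 ≤ volExp q X :=
  Real.sInf_nonneg fun _ h => h.1

theorem volExp_le {q : ℕ} {X : E →L[ℝ] E} {K : ℝ} (hK : 0 ≤ K)
    (h : ∀ w : Fin q → E, gramDet (fun i => X (w i)) ≤ K * gramDet w) : volExp q X ≤ K :=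
  csInf_le ⟨0, fun _ h => h.1⟩ (by exact ⟨hK, h⟩)

variable [FiniteDimensional ℝ E]

theorem exists_orthonormal_gramDet_map_eq (X : E →L[ℝ] E) {q : ℕ} {w : Fin q → E}
    (hw : LinearIndependent ℝ w) :
    ∃ v : Fin q → E, Orthonormal ℝ v ∧ (∀ i j, i ≠ j → ⟪X (v i), X (v j)⟫_ℝ = 0) ∧
      (Antitone fun i => ‖X (v i)‖) ∧
      gramDet (fun i => X (w i)) = gramDet w * ∏ i, ‖X (v i)‖ ^ 2 := by
  set K := Submodule.span ℝ (Set.range w) with hK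
  have hKq : finrank ℝ K = q := by simpa using finrank_span_eq_card hw
  obtain ⟨b, hb, hanti⟩ :=
    exists_orthonormalBasis_orthogonal_image (X.toLinearMap ∘ₗ K.subtype) hKq
  have hv : Orthonormal ℝ fun i => (b i : E) := b.orthonormal.comp_linearIsometry K.subtypeₗᵢ
  have hwK : ∀ i, w i ∈ K := fun i => Submodule.subset_span ⟨i, rfl⟩
  set C : Matrix (Fin q) (Fin q) ℝ := fun i j => ⟪b j, ⟨w i, hwK i⟩⟫_ℝ with hC
  have hsum : ∀ i, w i = ∑ j, C i j • (b j : E) := fun i => by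
    have := congrArg Subtype.val (b.sum_repr' ⟨w i, hwK i⟩)
    simpa [hC] using this.symm
  refine ⟨fun i => b i, hv, hb, hanti, ?_⟩
  have e1 : gramDet w = C.det ^ 2 := by
    conv_lhs => rw [funext hsum]
    rw [gramDet_sum_smul, gramDet_of_orthonormal hv, mul_one]
  have e2 : gramDet (fun i => X (w i)) = C.det ^ 2 * gramDet fun i => X (b i) := by
    rw [← gramDet_sum_smul]
    congr 1
    ext1 i
    rw [hsum i, map_sum]
    simp
  rw [e2, e1, gramDet_of_orthogonal (w := fun i => X (b i : E)) hb]

theorem gramDet_map_le (X : E →L[ℝ] E) {q : ℕ} (w : Fin q → E) :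
    gramDet (fun i => X (w i)) ≤ (‖X‖ ^ 2) ^ q * gramDet w := by
  by_cases hw : LinearIndependent ℝ w
  · obtain ⟨v, hv, -, -, e⟩ := exists_orthonormal_gramDet_map_eq X hw
    rw [e, mul_comm]
    refine mul_le_mul_of_nonneg_right ?_ (gramDet_nonneg w)
    calc ∏ i, ‖X (v i)‖ ^ 2 ≤ ∏ _i : Fin q, ‖X‖ ^ 2 :=
          Finset.prod_le_prod (fun _ _ => by positivity) fun i _ => by
            gcongr
            simpa [hv.1 i] using X.le_opNorm (v i)
      _ = (‖X‖ ^ 2) ^ q := by simp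
  · rw [gramDet_eq_zero hw, gramDet_eq_zero (w := fun i => X (w i))
      (fun h => hw (LinearIndependent.of_comp X.toLinearMap h)), mul_zero]

theorem gramDet_map_le_of_orthogonal_image (X : E →L[ℝ] E) {d : ℕ}
    (b : OrthonormalBasis (Fin d) ℝ E)
    (hb : ∀ i j, i ≠ j → ⟪X (b i), X (b j)⟫_ℝ = 0) (hanti : Antitone fun i => ‖X (b i)‖)
    {m : ℕ} (hm : m < d) (w : Fin (m + 1) → E) :
    gramDet (fun i => X (w i)) ≤ (‖X‖ ^ 2) ^ m * ‖X (b ⟨m, hm⟩)‖ ^ 2 * gramDet w := by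
  by_cases hw : LinearIndependent ℝ w
  · obtain ⟨v, hv, hvX, hvanti, e⟩ := exists_orthonormal_gramDet_map_eq X hw
    rw [e, mul_comm]
    refine mul_le_mul_of_nonneg_right ?_ (gramDet_nonneg w)
    rw [Fin.prod_univ_castSucc]
    have h1 : ∏ i : Fin m, ‖X (v i.castSucc)‖ ^ 2 ≤ (‖X‖ ^ 2) ^ m := by
      calc ∏ i : Fin m, ‖X (v i.castSucc)‖ ^ 2 ≤ ∏ _i : Fin m, ‖X‖ ^ 2 :=
          Finset.prod_le_prod (fun _ _ => by positivity) fun i _ => by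
            gcongr
            simpa [hv.1 i.castSucc] using X.le_opNorm (v i.castSucc)
        _ = (‖X‖ ^ 2) ^ m := by simp
    have h2 : ‖X (v (Fin.last m))‖ ^ 2 ≤ ‖X (b ⟨m, hm⟩)‖ ^ 2 := by
      -- a nonzero combination of the `v i` orthogonal to `b 0, …, b (m - 1)`
      obtain ⟨x, hx0, hx⟩ : ∃ x : Fin (m + 1) → ℝ, x ≠ 0 ∧
          ∀ k : Fin m, ⟪b ⟨k, k.2.trans hm⟩, ∑ i, x i • v i⟫_ℝ = 0 := by
        let φ : (Fin (m + 1) → ℝ) →ₗ[ℝ] (Fin m → ℝ) := LinearMap.pi fun k =>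
          (innerₗ E (b ⟨k, k.2.trans hm⟩)) ∘ₗ Fintype.linearCombination ℝ v
        obtain ⟨x, hx, hx0⟩ := φ.ker.ne_bot_iff.mp
          (LinearMap.ker_ne_bot_of_finrank_lt (f := φ) (by simp))
        refine ⟨x, hx0, fun k => ?_⟩
        have := congrFun (LinearMap.mem_ker.mp hx) k
        simpa [φ, Fintype.linearCombination_apply, inner_sum, real_inner_smul_right] using this
      set y := ∑ i, x i • v i with hy
      have hyn : ‖y‖ ^ 2 = ∑ i, x i ^ 2 := by
        rw [← real_inner_self_eq_norm_sq, hy, hv.inner_sum]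
        simp [sq]
      have hypos : 0 < ‖y‖ ^ 2 := by
        rw [hyn]
        obtain ⟨i, hi⟩ := Function.ne_iff.mp hx0
        exact Finset.sum_pos' (fun _ _ => sq_nonneg _) ⟨i, Finset.mem_univ _, by
          have : x i ≠ 0 := hi
          positivity⟩
      have hXy : ‖X y‖ ^ 2 = ∑ i, x i ^ 2 * ‖X (v i)‖ ^ 2 := by
        rw [← real_inner_self_eq_norm_sq, hy, map_sum, sum_inner]
        refine Finset.sum_congr rfl fun i _ => ?_
        rw [inner_sum, Finset.sum_eq_single i]
        · rw [map_smul, real_inner_smul_left, real_inner_smul_right, real_inner_self_eq_norm_sq]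
          ring
        · intro j _ hj
          rw [map_smul, map_smul, real_inner_smul_left, real_inner_smul_right, hvX i j hj.symm]
          ring
        · simp
      have lower : ‖X (v (Fin.last m))‖ ^ 2 * ‖y‖ ^ 2 ≤ ‖X y‖ ^ 2 := by
        rw [hXy, hyn, Finset.mul_sum]
        refine Finset.sum_le_sum fun i _ => ?_
        rw [mul_comm]
        gcongr
        exact hvanti (Fin.le_last i)
      have upper : ‖X y‖ ^ 2 ≤ ‖X (b ⟨m, hm⟩)‖ ^ 2 * ‖y‖ ^ 2 := by
        have e1 := norm_sq_map_eq_sum X.toLinearMap b hb y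
        rw [ContinuousLinearMap.coe_coe] at e1
        rw [e1, ← b.sum_sq_inner_right y, Finset.mul_sum]
        refine Finset.sum_le_sum fun i _ => ?_
        rcases lt_or_ge (i : ℕ) m with h | h
        · have := hx ⟨i, h⟩
          simp only [Fin.eta] at this
          rw [this]
          simp
        · rw [mul_comm]
          gcongr
          exact hanti (show (⟨m, hm⟩ : Fin d) ≤ i from h)
      exact le_of_mul_le_mul_right (lower.trans upper) hypos
    gcongr
  · rw [gramDet_eq_zero hw, gramDet_eq_zero (w := fun i => X (w i))
      (fun h => hw (LinearIndependent.of_comp X.toLinearMap h)), mul_zero]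

theorem gramDet_map_le_volExp {q : ℕ} (X : E →L[ℝ] E) (w : Fin q → E) :
    gramDet (fun i => X (w i)) ≤ volExp q X * gramDet w := by
  have hne : {K : ℝ | 0 ≤ K ∧ ∀ w : Fin q → E, gramDet (fun i => X (w i)) ≤ K * gramDet w}.Nonempty :=
    ⟨(‖X‖ ^ 2) ^ q, by positivity, gramDet_map_le X⟩
  rcases (gramDet_nonneg w).eq_or_lt with h0 | hpos
  · obtain ⟨K, -, hK⟩ := hne
    simpa [← h0] using hK w
  · rw [← div_le_iff₀ hpos]
    exact le_csInf hne fun K hK => (div_le_iff₀ hpos).mpr (hK.2 w)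

theorem volExp_le_iff {q : ℕ} {X : E →L[ℝ] E} {K : ℝ} (hK : 0 ≤ K) :
    volExp q X ≤ K ↔ ∀ w : Fin q → E, gramDet (fun i => X (w i)) ≤ K * gramDet w :=
  ⟨fun h w => (gramDet_map_le_volExp X w).trans
    (mul_le_mul_of_nonneg_right h (gramDet_nonneg w)), volExp_le hK⟩

theorem volExp_le_norm_pow (q : ℕ) (X : E →L[ℝ] E) : volExp q X ≤ (‖X‖ ^ 2) ^ q :=
  volExp_le (by positivity) (gramDet_map_le X)

theorem norm_sq_le_volExp_one (X : E →L[ℝ] E) : ‖X‖ ^ 2 ≤ volExp 1 X := by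
  have h : ‖X‖ ≤ √(volExp 1 X) := by
    refine X.opNorm_le_bound (Real.sqrt_nonneg _) fun v => ?_
    have h1 := gramDet_map_le_volExp X ![v]
    rw [gramDet_of_orthogonal (fun i j h => absurd (Subsingleton.elim i j) h),
      gramDet_of_orthogonal (fun i j h => absurd (Subsingleton.elim i j) h)] at h1
    simp only [Fin.prod_univ_one, Matrix.cons_val_fin_one] at h1
    rw [← abs_of_nonneg (norm_nonneg v), ← Real.sqrt_sq_eq_abs,
      ← Real.sqrt_mul (volExp_nonneg _ _)]
    exact Real.le_sqrt_of_sq_le h1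
  calc ‖X‖ ^ 2 ≤ √(volExp 1 X) ^ 2 := by gcongr
    _ = volExp 1 X := Real.sq_sqrt (volExp_nonneg _ _)

theorem volExp_mul_le (q : ℕ) (X Y : E →L[ℝ] E) :
    volExp q (X * Y) ≤ volExp q X * volExp q Y :=
  volExp_le (mul_nonneg (volExp_nonneg _ _) (volExp_nonneg _ _)) fun w => by
    rw [mul_assoc]
    exact (gramDet_map_le_volExp X fun i => Y (w i)).trans
      (mul_le_mul_of_nonneg_left (gramDet_map_le_volExp Y w) (volExp_nonneg _ _))

theorem volExp_pos {q : ℕ} {X : E →L[ℝ] E} (hq : q ≤ finrank ℝ X.range) : 0 < volExp q X := by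
  obtain ⟨u, hu⟩ := exists_linearIndependent_of_le_finrank hq
  choose w hw using fun i => (u i).2
  have h1 : LinearIndependent ℝ fun i => X (w i) := by
    have : (fun i => X (w i)) = fun i => (u i : E) := funext hw
    rw [this]
    exact hu.map' X.range.subtype (Submodule.ker_subtype _)
  have h2 := (gramDet_pos h1).trans_le (gramDet_map_le_volExp X w)
  exact pos_of_mul_pos_left h2 (gramDet_nonneg w)

theorem volExp_eq_zero {q : ℕ} {X : E →L[ℝ] E} (hq : finrank ℝ X.range < q) :
    volExp q X = 0 := by
  refine le_antisymm (volExp_le le_rfl fun w => ?_) (volExp_nonneg _ _)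
  rw [zero_mul, gramDet_eq_zero]
  intro h
  have h1 : LinearIndependent ℝ fun i => (⟨X (w i), ⟨w i, rfl⟩⟩ : X.range) :=
    LinearIndependent.of_comp X.range.subtype h
  have := h1.fintype_card_le_finrank
  rw [Fintype.card_fin] at this
  omega

theorem measurable_volExp (q : ℕ) : Measurable (volExp q : (E →L[ℝ] E) → ℝ) := by
  refine measurable_of_Iic fun K => ?_
  by_cases hK : 0 ≤ K
  · have : volExp q ⁻¹' Set.Iic K =
        ⋂ w : Fin q → E, {X : E →L[ℝ] E | gramDet (fun i => X (w i)) ≤ K * gramDet w} := by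
      ext X
      simp [volExp_le_iff hK]
    rw [this]
    refine (isClosed_iInter fun w => isClosed_le ?_ continuous_const).measurableSet
    exact (continuous_gramDet q).comp (by fun_prop)
  · have : volExp q ⁻¹' Set.Iic K = (∅ : Set (E →L[ℝ] E)) := by
      ext X
      simpa using (not_le.mp hK).trans_le (volExp_nonneg q X)
    rw [this]
    exact MeasurableSet.empty

/-- A splitting of the space into `p` strongly expanded directions and an orthogonal complement,
with the expansion on both parts controlled by volume growth. -/
theorem exists_submodule_expansion (X : E →L[ℝ] E) {p : ℕ} (hp : 1 ≤ p) (hpd : p ≤ finrank ℝ E) :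
    ∃ (U : Submodule ℝ E) (s t : ℝ), finrank ℝ U + p = finrank ℝ E ∧ 0 ≤ s ∧ 0 ≤ t ∧
      (∀ u ∈ U, ‖X u‖ ≤ t * ‖u‖) ∧ (∀ v, s * ‖v - U.starProjection v‖ ≤ ‖X v‖) ∧
      volExp p X ≤ (‖X‖ ^ 2) ^ (p - 1) * s ^ 2 ∧ (s ^ 2) ^ p * t ^ 2 ≤ volExp (p + 1) X := by
  set d := finrank ℝ E with hd
  obtain ⟨b, hb, hanti⟩ := exists_orthonormalBasis_orthogonal_image X.toLinearMap hd.symm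
  have hb' : ∀ i j, i ≠ j → ⟪X (b i), X (b j)⟫_ℝ = 0 := hb
  have hanti' : Antitone fun i => ‖X (b i)‖ := hanti
  have hsq : ∀ v, ‖X v‖ ^ 2 = ∑ i, ⟪b i, v⟫_ℝ ^ 2 * ‖X (b i)‖ ^ 2 :=
    norm_sq_map_eq_sum X.toLinearMap b hb
  set c : Fin p → E := fun i => b (Fin.castLE hpd i) with hc
  have hcon : Orthonormal ℝ c := b.orthonormal.comp _ (Fin.castLE_injective hpd)
  set K := Submodule.span ℝ (Set.range c) with hK
  have hKp : finrank ℝ K = p := by simpa using finrank_span_eq_card hcon.linearIndependent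
  have hbK : ∀ i : Fin d, (i : ℕ) < p → b i ∈ K := fun i hi =>
    Submodule.subset_span ⟨⟨i, hi⟩, rfl⟩
  have hbU : ∀ i : Fin d, p ≤ (i : ℕ) → b i ∈ Kᗮ := fun i hi => by
    rw [Submodule.mem_orthogonal]
    intro u hu
    induction hu using Submodule.span_induction with
    | mem x hx =>
      obtain ⟨j, rfl⟩ := hx
      refine b.inner_eq_zero fun h => ?_
      have := congrArg Fin.val h
      have := j.2
      simp at *
      omega
    | zero => simp
    | add x y _ _ hx hy => rw [inner_add_left, hx, hy, add_zero]
    | smul r x _ hx => rw [real_inner_smul_left, hx, mul_zero]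
  have hUK : ∀ i : Fin d, (i : ℕ) < p → ∀ u ∈ Kᗮ, ⟪b i, u⟫_ℝ = 0 := fun i hi u hu =>
    (Submodule.mem_orthogonal K u).mp hu _ (hbK i hi)
  set s := ‖X (b ⟨p - 1, by omega⟩)‖ with hs
  set t := if h : p < d then ‖X (b ⟨p, h⟩)‖ else 0 with ht
  have ht0 : 0 ≤ t := by
    rw [ht]
    split_ifs
    exacts [norm_nonneg _, le_rfl]
  refine ⟨Kᗮ, s, t, ?_, norm_nonneg _, ht0, fun u hu => ?_, fun v => ?_, ?_, ?_⟩
  · rw [hd, ← K.finrank_add_finrank_orthogonal, hKp, add_comm]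
  · refine le_of_sq_le_sq ?_ (by positivity)
    rw [mul_pow, hsq, ← b.sum_sq_inner_right u, Finset.mul_sum]
    refine Finset.sum_le_sum fun i _ => ?_
    rcases lt_or_ge (i : ℕ) p with h | h
    · rw [hUK i h u hu]
      simp
    · have hpd' : p < d := h.trans_lt i.2
      rw [mul_comm, ht, dif_pos hpd']
      gcongr
      exact hanti' (show (⟨p, hpd'⟩ : Fin d) ≤ i from h)
  · refine le_of_sq_le_sq ?_ (by positivity)
    rw [mul_pow, hsq v, ← b.sum_sq_inner_right (v - Kᗮ.starProjection v), Finset.mul_sum]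
    refine Finset.sum_le_sum fun i _ => ?_
    rcases lt_or_ge (i : ℕ) p with h | h
    · rw [inner_sub_right, hUK i h _ (Submodule.starProjection_apply_mem _ _), sub_zero, mul_comm]
      gcongr
      exact hanti' (show i ≤ (⟨p - 1, by omega⟩ : Fin d) from Fin.mk_le_mk.mpr (by omega))
    · rw [(Submodule.mem_orthogonal Kᗮ _).mp (Submodule.sub_starProjection_mem_orthogonal v) _
        (hbU i h)]
      simp
      positivity
  · obtain ⟨m, rfl⟩ : ∃ m, p = m + 1 := ⟨p - 1, by omega⟩
    exact volExp_le (by positivity)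
      (gramDet_map_le_of_orthogonal_image X b hb' hanti' (m := m) (by omega))
  · by_cases h : p < d
    · have h1 := gramDet_map_le_volExp X fun i : Fin (p + 1) => b (Fin.castLE h i)
      have h2 : Orthonormal ℝ fun i : Fin (p + 1) => b (Fin.castLE h i) :=
        b.orthonormal.comp _ (Fin.castLE_injective h)
      rw [gramDet_of_orthonormal h2, mul_one, gramDet_of_orthogonal (fun i j hij => hb' _ _
        fun h' => hij (Fin.castLE_injective h h')), Fin.prod_univ_castSucc] at h1
      refine le_trans ?_ h1
      rw [ht, dif_pos h]
      refine mul_le_mul_of_nonneg_right ?_ (by positivity)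
      calc (s ^ 2) ^ p = ∏ _i : Fin p, s ^ 2 := by simp
        _ ≤ _ := Finset.prod_le_prod (fun _ _ => by positivity) fun i _ => by
          gcongr
          exact hanti' (Fin.mk_le_mk.mpr (by simp; omega))
    · rw [ht, dif_neg h]
      simpa using volExp_nonneg (p + 1) X

end Volume

section Projections

open Module

open scoped InnerProductSpace

variable {E : Type*} [NormedAddCommGroup E] [InnerProductSpace ℝ E] [FiniteDimensional ℝ E]

theorem norm_sub_starProjection_le {U : Submodule ℝ E} (v : E) {u : E} (hu : u ∈ U) :
    ‖v - U.starProjection v‖ ≤ ‖v - u‖ := by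
  rw [U.starProjection_minimal]
  exact ciInf_le ⟨0, by rintro _ ⟨x, rfl⟩; positivity⟩ (⟨u, hu⟩ : U)

theorem finrank_le_of_norm_starProjection_sub_lt_one {U V : Submodule ℝ E}
    (h : ‖U.starProjection - V.starProjection‖ < 1) : finrank ℝ U ≤ finrank ℝ V := by
  refine LinearMap.finrank_le_finrank_of_injective
    (f := V.orthogonalProjectionOnto.toLinearMap ∘ₗ U.subtype) ?_
  rw [← LinearMap.ker_eq_bot, LinearMap.ker_eq_bot']
  intro u hu
  have h0 : V.starProjection (u : E) = 0 := by
    rw [Submodule.starProjection_apply]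
    simpa using congrArg Subtype.val hu
  have h1 := (U.starProjection - V.starProjection).le_opNorm (u : E)
  rw [sub_apply, h0, U.starProjection_eq_self_iff.mpr u.2, sub_zero] at h1
  by_contra hne
  have : 0 < ‖(u : E)‖ := by simpa using hne
  nlinarith

/-- If `U` almost lies in a subspace `U'` of the same dimension, the orthogonal projections onto
`U` and `U'` are close to each other. -/
theorem norm_starProjection_sub_le {U U' : Submodule ℝ E} (hr : finrank ℝ U = finrank ℝ U') {δ : ℝ}
    (hδ0 : 0 ≤ δ) (hδ : δ ≤ 1 / 2) (h : ∀ u ∈ U, ‖u - U'.starProjection u‖ ≤ δ * ‖u‖) :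
    ‖U.starProjection - U'.starProjection‖ ≤ 3 * δ := by
  have hinj : Function.Injective (U'.orthogonalProjectionOnto.toLinearMap ∘ₗ U.subtype) := by
    rw [← LinearMap.ker_eq_bot, LinearMap.ker_eq_bot']
    intro u hu
    have h0 : U'.starProjection (u : E) = 0 := by
      rw [Submodule.starProjection_apply]
      simpa using congrArg Subtype.val hu
    have h1 := h u u.2
    rw [h0, sub_zero] at h1
    by_contra hne
    have : 0 < ‖(u : E)‖ := by simpa using hne
    nlinarith
  have hsurj := (LinearMap.injective_iff_surjective_of_finrank_eq_finrank hr).mp hinj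
  have h' : ∀ w ∈ U', ‖w - U.starProjection w‖ ≤ 2 * δ * ‖w‖ := fun w hw => by
    obtain ⟨u, hu⟩ := hsurj ⟨w, hw⟩
    have hu' : U'.starProjection (u : E) = w := by
      rw [Submodule.starProjection_apply]
      simpa using congrArg Subtype.val hu
    have h1 := h u u.2
    rw [hu'] at h1
    have h2 : ‖(u : E)‖ ≤ ‖w‖ + ‖(u : E) - w‖ := by
      simpa using norm_add_le w ((u : E) - w)
    have h3 : ‖w - U.starProjection w‖ ≤ ‖(u : E) - w‖ := by
      rw [norm_sub_rev (u : E)]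
      exact norm_sub_starProjection_le w u.2
    have : ‖(u : E)‖ ≤ 2 * ‖w‖ := by nlinarith [norm_nonneg (u : E)]
    nlinarith
  refine ContinuousLinearMap.opNorm_le_bound _ (by positivity) fun v => ?_
  set x := v - U'.starProjection v with hx
  set y := U.starProjection x with hy
  have hxv : ‖y‖ ≤ δ * ‖v‖ := by
    have e : ‖y‖ ^ 2 = ⟪v, y - U'.starProjection y⟫_ℝ := by
      rw [← real_inner_self_eq_norm_sq, inner_sub_right,
        ← U'.inner_starProjection_left_eq_right, ← inner_sub_left, ← hx]
      conv_lhs => rw [hy, U.inner_starProjection_left_eq_right,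
        U.starProjection_eq_self_iff.mpr (U.starProjection_apply_mem _)]
    have h1 : ‖y‖ ^ 2 ≤ ‖v‖ * (δ * ‖y‖) := by
      rw [e]
      refine (real_inner_le_norm _ _).trans ?_
      gcongr
      exact h y (U.starProjection_apply_mem _)
    rcases (norm_nonneg y).eq_or_lt with h0 | h0
    · rw [← h0]
      positivity
    · refine le_of_mul_le_mul_right ?_ h0
      nlinarith
  have e : (U.starProjection - U'.starProjection) v
      = y - (U'.starProjection v - U.starProjection (U'.starProjection v)) := by
    rw [hy, hx, map_sub, sub_apply]
    abel
  rw [e]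
  have h1 := h' _ (U'.starProjection_apply_mem v)
  have h2 := U'.norm_starProjection_apply_le v
  calc _ ≤ ‖y‖ + _ := norm_sub_le _ _
    _ ≤ δ * ‖v‖ + 2 * δ * ‖v‖ := by
      gcongr
      exact h1.trans (by gcongr)
    _ = 3 * δ * ‖v‖ := by ring

theorem exists_tendsto_starProjection {P : E →L[ℝ] E} {U : ℕ → Submodule ℝ E} {r : ℕ}
    (hr : ∀ n, finrank ℝ (U n) = r)
    (hP : Tendsto (fun n => (U n).starProjection) atTop (𝓝 P)) :
    ∃ V : Submodule ℝ E, finrank ℝ V = r ∧ P = V.starProjection := by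
  have hstar : IsStarProjection P := by
    refine ⟨?_, ?_⟩
    · have h1 := hP.mul hP
      refine tendsto_nhds_unique (h1.congr fun n => ?_) hP
      exact (isStarProjection_starProjection (U := U n)).isIdempotentElem
    · have h1 := hP.star
      refine tendsto_nhds_unique (h1.congr fun n => ?_) hP
      exact (isStarProjection_starProjection (U := U n)).isSelfAdjoint
  obtain ⟨_, hV⟩ := isStarProjection_iff_eq_starProjection_range.mp hstar
  refine ⟨_, ?_, hV⟩
  have h0 : ∀ᶠ n in atTop, dist (U n).starProjection P < 1 :=
    (Metric.tendsto_nhds.mp hP) 1 one_pos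
  obtain ⟨n, hn⟩ := h0.exists
  rw [← hr n]
  refine le_antisymm (finrank_le_of_norm_starProjection_sub_lt_one ?_)
    (finrank_le_of_norm_starProjection_sub_lt_one ?_)
  · rwa [dist_comm, dist_eq_norm, hV] at hn
  · rwa [dist_eq_norm, hV] at hn

/-- The resolvent-type operator `(1 + c² X† X)⁻¹`. -/
noncomputable def gramResolvent (c : ℝ) (X : E →L[ℝ] E) : E →L[ℝ] E :=
  Ring.inverse (1 + c ^ 2 • (star X * X))

theorem isUnit_one_add_sq_smul_star_mul_self (c : ℝ) (X : E →L[ℝ] E) :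
    IsUnit (1 + c ^ 2 • (star X * X)) := by
  have hinj : Function.Injective (1 + c ^ 2 • (star X * X) : E →L[ℝ] E).toLinearMap := by
    rw [← LinearMap.ker_eq_bot, LinearMap.ker_eq_bot']
    intro v hv
    have h1 : ⟪v, v + c ^ 2 • (star X) (X v)⟫_ℝ = ⟪v, (0 : E)⟫_ℝ := congrArg (fun x => ⟪v, x⟫_ℝ) hv
    rw [inner_add_right, real_inner_smul_right, inner_zero_right,
      ContinuousLinearMap.star_eq_adjoint, ContinuousLinearMap.adjoint_inner_right,
      real_inner_self_eq_norm_sq, real_inner_self_eq_norm_sq] at h1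
    have : ‖v‖ ^ 2 = 0 := by nlinarith [sq_nonneg ‖v‖, mul_nonneg (sq_nonneg c) (sq_nonneg ‖X v‖)]
    simpa using this
  exact ContinuousLinearMap.isUnit_iff_bijective.mpr
    ⟨hinj, LinearMap.injective_iff_surjective.mp hinj⟩

theorem continuous_gramResolvent (c : ℝ) :
    Continuous (gramResolvent c : (E →L[ℝ] E) → E →L[ℝ] E) := by
  rw [continuous_iff_continuousAt]
  intro X
  obtain ⟨u, hu⟩ := isUnit_one_add_sq_smul_star_mul_self c X
  have h1 : Continuous fun X : E →L[ℝ] E => 1 + c ^ 2 • (star X * X) := by fun_prop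
  have h2 := NormedRing.inverse_continuousAt u
  rw [hu] at h2
  exact ContinuousAt.comp (f := fun X : E →L[ℝ] E => 1 + c ^ 2 • (star X * X)) h2 h1.continuousAt

theorem gramResolvent_add (c : ℝ) (X : E →L[ℝ] E) :
    gramResolvent c X + c ^ 2 • (star X * (X * gramResolvent c X)) = 1 := by
  have := Ring.mul_inverse_cancel _ (isUnit_one_add_sq_smul_star_mul_self c X)
  rwa [add_mul, one_mul, smul_mul_assoc, mul_assoc] at this

theorem norm_sq_gramResolvent_add (c : ℝ) (X : E →L[ℝ] E) (v : E) :
    ‖gramResolvent c X v‖ ^ 2 + c ^ 2 * ‖X (gramResolvent c X v)‖ ^ 2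
      = ⟪gramResolvent c X v, v⟫_ℝ := by
  have h : gramResolvent c X v + c ^ 2 • (star X) (X (gramResolvent c X v)) = v :=
    congrArg (fun Y : E →L[ℝ] E => Y v) (gramResolvent_add c X)
  have e := congrArg (fun x => ⟪gramResolvent c X v, x⟫_ℝ) h
  rwa [inner_add_right, real_inner_smul_right,
      ContinuousLinearMap.star_eq_adjoint, ContinuousLinearMap.adjoint_inner_right,
      real_inner_self_eq_norm_sq, real_inner_self_eq_norm_sq] at e

theorem norm_gramResolvent_apply_le (c : ℝ) (X : E →L[ℝ] E) (v : E) :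
    ‖gramResolvent c X v‖ ≤ ‖v‖ := by
  have h1 := norm_sq_gramResolvent_add c X v
  have h2 := real_inner_le_norm (gramResolvent c X v) v
  have h3 : 0 ≤ c ^ 2 * ‖X (gramResolvent c X v)‖ ^ 2 := by positivity
  by_contra! h
  nlinarith [norm_nonneg v]

theorem mul_norm_map_gramResolvent_apply_le (c : ℝ) (X : E →L[ℝ] E) (v : E) :
    c * ‖X (gramResolvent c X v)‖ ≤ ‖v‖ := by
  have h1 := norm_sq_gramResolvent_add c X v
  have h2 := real_inner_le_norm (gramResolvent c X v) v
  have h3 := norm_gramResolvent_apply_le c X v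
  refine le_of_sq_le_sq ?_ (norm_nonneg v)
  rw [mul_pow]
  nlinarith [norm_nonneg v, sq_nonneg ‖gramResolvent c X v‖]

theorem norm_gramResolvent_sub_starProjection_le {c s : ℝ} (hc : 0 < c) (hs : 0 < s)
    {X : E →L[ℝ] E} {U : Submodule ℝ E} (hX : ∀ v, s * ‖v - U.starProjection v‖ ≤ ‖X v‖)
    (V : Submodule ℝ E) :
    ‖gramResolvent c X - V.starProjection‖
      ≤ (c * s)⁻¹ + ‖U.starProjection - V.starProjection‖ + c * ‖X * V.starProjection‖ := by
  refine ContinuousLinearMap.opNorm_le_bound _ (by positivity) fun v => ?_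
  set y := gramResolvent c X v with hy
  have hyv : ‖y‖ ≤ ‖v‖ := norm_gramResolvent_apply_le c X v
  have hXy : c * ‖X y‖ ≤ ‖v‖ := mul_norm_map_gramResolvent_apply_le c X v
  have hadd : y + c ^ 2 • (star X) (X y) = v :=
    congrArg (fun Y : E →L[ℝ] E => Y v) (gramResolvent_add c X)
  have e : (gramResolvent c X - V.starProjection) v = (y - U.starProjection y)
      + (U.starProjection - V.starProjection) y
      - c ^ 2 • (star (X * V.starProjection)) (X y) := by
    have h1 : V.starProjection v = V.starProjection y
        + c ^ 2 • V.starProjection ((star X) (X y)) := by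
      conv_lhs => rw [← hadd]
      rw [map_add, map_smul]
    have h2 : (star (X * V.starProjection)) (X y) = V.starProjection ((star X) (X y)) := by
      rw [star_mul, (isStarProjection_starProjection (U := V)).isSelfAdjoint]
      rfl
    rw [h2, sub_apply, sub_apply, h1, ← hy]
    abel
  have b1 : ‖y - U.starProjection y‖ ≤ (c * s)⁻¹ * ‖v‖ := by
    rw [inv_mul_eq_div, le_div_iff₀ (by positivity)]
    calc _ = c * (s * ‖y - U.starProjection y‖) := by ring
      _ ≤ c * ‖X y‖ := by gcongr; exact hX y
      _ ≤ ‖v‖ := hXy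
  have b2 : ‖(U.starProjection - V.starProjection) y‖
      ≤ ‖U.starProjection - V.starProjection‖ * ‖v‖ :=
    (ContinuousLinearMap.le_opNorm _ _).trans (by gcongr)
  have b3 : ‖c ^ 2 • (star (X * V.starProjection)) (X y)‖ ≤ c * ‖X * V.starProjection‖ * ‖v‖ := by
    have hn : ‖star (X * V.starProjection)‖ = ‖X * V.starProjection‖ :=
      ContinuousLinearMap.adjoint.norm_map _
    rw [norm_smul, Real.norm_of_nonneg (by positivity)]
    calc _ ≤ c ^ 2 * (‖star (X * V.starProjection)‖ * ‖X y‖) := by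
          gcongr
          exact ContinuousLinearMap.le_opNorm _ _
      _ = c * ‖X * V.starProjection‖ * (c * ‖X y‖) := by rw [hn]; ring
      _ ≤ _ := by gcongr
  rw [e]
  calc _ ≤ ‖y - U.starProjection y‖ + ‖(U.starProjection - V.starProjection) y‖
        + ‖c ^ 2 • (star (X * V.starProjection)) (X y)‖ :=
        (norm_sub_le _ _).trans (by gcongr; exact norm_add_le _ _)
    _ ≤ _ := by linarith

end Projections

section Splitting

open Module

theorem eventually_mul_exp_le (C : ℝ) {α β : ℝ} (h : α < β) :
    ∀ᶠ n : ℕ in atTop, C * Real.exp (α * n) ≤ Real.exp (β * n) := by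
  have h1 : Tendsto (fun n : ℕ => Real.exp ((β - α) * n)) atTop atTop :=
    Real.tendsto_exp_atTop.comp
      (tendsto_natCast_atTop_atTop.const_mul_atTop (sub_pos.mpr h))
  filter_upwards [h1.eventually_ge_atTop C] with n hn
  calc C * Real.exp (α * n) ≤ Real.exp ((β - α) * n) * Real.exp (α * n) := by gcongr
    _ = Real.exp (β * n) := by rw [← Real.exp_add]; ring_nf

theorem exists_tendsto_of_dist_le_geometric {X : Type*} [MetricSpace X] [CompleteSpace X]
    {x : ℕ → X} {r : ℝ} (hr : r < 1)
    (h : ∀ᶠ n in atTop, dist (x n) (x (n + 1)) ≤ r ^ n) :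
    ∃ y C, Tendsto x atTop (𝓝 y) ∧ ∀ᶠ n in atTop, dist (x n) y ≤ C * r ^ n := by
  obtain ⟨N, hN⟩ := eventually_atTop.mp h
  have h' : ∀ n, dist (x (n + N)) (x (n + 1 + N)) ≤ r ^ N * r ^ n := fun n => by
    have := hN (n + N) (by omega)
    rwa [show n + N + 1 = n + 1 + N by ring, pow_add, mul_comm] at this
  obtain ⟨y, hy⟩ := cauchySeq_tendsto_of_complete (cauchySeq_of_le_geometric r _ hr h')
  refine ⟨y, (1 - r)⁻¹, (tendsto_add_atTop_iff_nat N).mp hy, ?_⟩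
  filter_upwards [eventually_ge_atTop N] with n hn
  have := dist_le_of_le_geometric_of_tendsto r _ hr h' hy (n - N)
  rwa [← pow_add, Nat.sub_add_cancel hn, Nat.add_sub_cancel' hn, div_eq_inv_mul] at this

theorem tendsto_log_norm_div {E : Type*} [NormedAddCommGroup E] {x : ℕ → E} {l : ℝ}
    (hlow : ∀ ε > 0, ∀ᶠ n : ℕ in atTop, Real.exp ((l - ε) * n) ≤ ‖x n‖)
    (hup : ∀ ε > 0, ∀ᶠ n : ℕ in atTop, ‖x n‖ ≤ Real.exp ((l + ε) * n)) :
    Tendsto (fun n : ℕ => Real.log ‖x n‖ / n) atTop (𝓝 l) := by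
  rw [Metric.tendsto_nhds]
  intro ε hε
  filter_upwards [hlow (ε / 2) (by positivity), hup (ε / 2) (by positivity),
    eventually_gt_atTop 0] with n h1 h2 hn
  have hn' : (0 : ℝ) < n := by exact_mod_cast hn
  have hpos := (Real.exp_pos _).trans_le h1
  have h3 := (Real.le_log_iff_exp_le hpos).mpr h1
  have h4 := (Real.log_le_iff_le_exp hpos).mpr h2
  have h5 := (le_div_iff₀ hn').mpr h3
  have h6 := (div_le_iff₀ hn').mpr h4
  rw [Real.dist_eq, abs_lt]
  constructor <;> linarith

variable {E : Type*} [NormedAddCommGroup E] [InnerProductSpace ℝ E] [FiniteDimensional ℝ E]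

/-- A sequence of products whose `p`-dimensional volume growth is maximal, and whose
`p + 1`-dimensional volume growth is not, singles out a subspace of codimension `p` of vectors which
grow strictly slower than all others. -/
theorem exists_slow_submodule {a B : ℕ → E →L[ℝ] E} (hBa : ∀ n, B (n + 1) = a n * B n)
    {p : ℕ} (hp : 1 ≤ p) (hpd : p ≤ finrank ℝ E) {l η : ℝ} (hη : 0 < η)
    (ha : ∀ ε > 0, ∀ᶠ n : ℕ in atTop, ‖a n‖ ≤ Real.exp (ε * n))
    (hB : ∀ ε > 0, ∀ᶠ n : ℕ in atTop, ‖B n‖ ≤ Real.exp ((l + ε) * n))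
    (hlow : ∀ ε > 0, ∀ᶠ n : ℕ in atTop, Real.exp ((2 * p * l - ε) * n) ≤ volExp p (B n))
    (hup : ∀ᶠ n : ℕ in atTop,
      volExp (p + 1) (B n) ≤ Real.exp ((2 * (p + 1) * l - 2 * η) * n)) :
    ∃ U : Submodule ℝ E, finrank ℝ U + p = finrank ℝ E ∧
      (∀ v ∉ U, ∀ ε > 0, ∀ᶠ n : ℕ in atTop, Real.exp ((l - ε) * n) ≤ ‖B n v‖) ∧
      (∀ v ∈ U, ∀ᶠ n : ℕ in atTop, ‖B n v‖ ≤ Real.exp ((l - η / 4) * n)) ∧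
      Tendsto (fun n : ℕ => gramResolvent (Real.exp (-(l - η / 4) * n)) (B n)) atTop
        (𝓝 U.starProjection) := by
  choose U s t hUp hs0 ht0 hU hs hsvol htvol using
    fun n => exists_submodule_expansion (B n) hp hpd
  have hp' : (1 : ℝ) ≤ p := by exact_mod_cast hp
  have hs_low : ∀ ε > 0, ∀ᶠ n : ℕ in atTop, Real.exp ((l - ε) * n) ≤ s n := by
    intro ε hε
    filter_upwards [hlow (ε / p) (by positivity), hB (ε / p) (by positivity)] with n h1 h2
    refine le_of_sq_le_sq ?_ (hs0 n)
    have h3 : (‖B n‖ ^ 2) ^ (p - 1) ≤ Real.exp (2 * (p - 1) * (l + ε / p) * n) := by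
      calc (‖B n‖ ^ 2) ^ (p - 1) ≤ (Real.exp ((l + ε / p) * n) ^ 2) ^ (p - 1) := by gcongr
        _ = _ := by
          rw [← pow_mul, ← Real.exp_nat_mul]
          congr 1
          push_cast [Nat.cast_sub hp]
          ring
    have h4 : Real.exp ((2 * p * l - ε / p) * n)
        ≤ Real.exp (2 * (p - 1) * (l + ε / p) * n) * s n ^ 2 :=
      h1.trans ((hsvol n).trans (by gcongr))
    have h5 : Real.exp ((2 * p * l - ε / p) * n - 2 * (p - 1) * (l + ε / p) * n) ≤ s n ^ 2 := by
      rwa [Real.exp_sub, div_le_iff₀' (Real.exp_pos _)]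
    refine le_trans ?_ h5
    rw [← Real.exp_nat_mul, Real.exp_le_exp]
    have : (2 * p * l - ε / p) * n - 2 * (p - 1) * (l + ε / p) * n
        - (2 : ℕ) * ((l - ε) * n) = (ε / p) * n := by
      field_simp
      push_cast
      ring
    have h6 : 0 ≤ (ε / p) * n := by positivity
    linarith
  have ht_up : ∀ ε > 0, ∀ᶠ n : ℕ in atTop, t n ≤ Real.exp ((l - η + ε) * n) := by
    intro ε hε
    filter_upwards [hs_low (ε / p) (by positivity), hup] with n h1 h2
    refine le_of_sq_le_sq ?_ (Real.exp_pos _).le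
    have h3 : Real.exp (2 * p * (l - ε / p) * n) ≤ (s n ^ 2) ^ p := by
      calc _ = (Real.exp ((l - ε / p) * n) ^ 2) ^ p := by
            rw [← pow_mul, ← Real.exp_nat_mul]
            congr 1
            push_cast
            ring
        _ ≤ _ := by gcongr
    have h4 : Real.exp (2 * p * (l - ε / p) * n) * t n ^ 2
        ≤ Real.exp ((2 * (p + 1) * l - 2 * η) * n) :=
      (by gcongr : _ ≤ (s n ^ 2) ^ p * t n ^ 2).trans ((htvol n).trans h2)
    rw [← le_div_iff₀' (Real.exp_pos _), ← Real.exp_sub] at h4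
    refine h4.trans (le_of_eq ?_)
    rw [← Real.exp_nat_mul]
    congr 1
    field_simp
    push_cast
    ring
  have hclose : ∀ᶠ n : ℕ in atTop,
      dist (U n).starProjection (U (n + 1)).starProjection ≤ Real.exp (-(η / 2)) ^ n := by
    filter_upwards [ha (η / 16) (by positivity), ht_up (η / 16) (by positivity),
      (tendsto_add_atTop_nat 1).eventually (hs_low (η / 16) (by positivity)),
      eventually_mul_exp_le (3 * Real.exp (-(l - η / 16)))
        (show -(13 * η / 16) < -(η / 2) by linarith),
      eventually_mul_exp_le (2 * Real.exp (-(l - η / 16)))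
        (show -(13 * η / 16) < 0 by linarith)] with n h1 h2 h3 h4 h5
    set δ := Real.exp (-(l - η / 16)) * Real.exp (-(13 * η / 16) * n) with hδ
    have hδs : Real.exp (η / 16 * n) * Real.exp ((l - η + η / 16) * n) ≤ δ * s (n + 1) := by
      calc _ = δ * Real.exp ((l - η / 16) * ((n + 1 : ℕ) : ℝ)) := by
            rw [hδ, ← Real.exp_add, ← Real.exp_add, ← Real.exp_add]
            congr 1
            push_cast
            ring
        _ ≤ _ := by gcongr
    have hspos : 0 < s (n + 1) := (Real.exp_pos _).trans_le h3
    have hδ2 : δ ≤ 1 / 2 := by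
      rw [zero_mul, Real.exp_zero, mul_assoc, ← hδ] at h5
      linarith
    rw [dist_eq_norm]
    refine (norm_starProjection_sub_le ?_ (by positivity) hδ2 fun u hu => ?_).trans ?_
    · have := hUp n
      have := hUp (n + 1)
      omega
    · refine le_of_mul_le_mul_left ?_ hspos
      calc _ ≤ ‖B (n + 1) u‖ := hs (n + 1) u
        _ = ‖a n (B n u)‖ := by rw [hBa]; rfl
        _ ≤ ‖a n‖ * ‖B n u‖ := (a n).le_opNorm _
        _ ≤ ‖a n‖ * (t n * ‖u‖) := by gcongr; exact hU n u hu
        _ = ‖a n‖ * t n * ‖u‖ := by ring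
        _ ≤ Real.exp (η / 16 * n) * Real.exp ((l - η + η / 16) * n) * ‖u‖ := by
          gcongr
          exact ht0 n
        _ ≤ δ * s (n + 1) * ‖u‖ := by gcongr
        _ = _ := by ring
    · rw [← Real.exp_nat_mul, mul_comm (n : ℝ), hδ, ← mul_assoc]
      exact h4
  obtain ⟨P, C, hP, hPC⟩ := exists_tendsto_of_dist_le_geometric
    (Real.exp_lt_one_iff.mpr (by linarith)) hclose
  obtain ⟨V, hVr, rfl⟩ := exists_tendsto_starProjection (r := finrank ℝ E - p)
    (fun n => by have := hUp n; omega) hP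
  have hBV : ∀ᶠ n : ℕ in atTop, ‖B n * V.starProjection‖ ≤ Real.exp ((l - 3 * η / 8) * n) := by
    filter_upwards [hPC, ht_up (η / 2) (by positivity), hB (η / 16) (by positivity),
      eventually_mul_exp_le 2 (show l - η / 2 < l - 3 * η / 8 by linarith),
      eventually_mul_exp_le (2 * C) (show l - 7 * η / 16 < l - 3 * η / 8 by linarith)]
      with n h1 h2 h3 h4 h5
    have e : B n * V.starProjection = B n * (U n).starProjection * V.starProjection
        - B n * ((U n).starProjection - V.starProjection) * V.starProjection := by
      have : V.starProjection * V.starProjection = V.starProjection :=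
        (isStarProjection_starProjection (U := V)).isIdempotentElem
      rw [mul_sub, sub_mul, sub_sub_cancel, mul_assoc, this]
    have hUn : ‖B n * (U n).starProjection‖ ≤ t n := by
      refine ContinuousLinearMap.opNorm_le_bound _ (ht0 n) fun v => ?_
      refine (hU n _ ((U n).starProjection_apply_mem v)).trans ?_
      have := (U n).norm_starProjection_apply_le v
      have := ht0 n
      gcongr
    have hV1 := V.starProjection_norm_le
    rw [dist_eq_norm] at h1
    have b1 : ‖B n * (U n).starProjection * V.starProjection‖ ≤ t n :=
      calc _ ≤ ‖B n * (U n).starProjection‖ * ‖V.starProjection‖ := norm_mul_le _ _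
        _ ≤ t n * 1 := by gcongr; exact ht0 n
        _ = t n := mul_one _
    have b2 : ‖B n * ((U n).starProjection - V.starProjection) * V.starProjection‖
        ≤ C * Real.exp ((l - 7 * η / 16) * n) :=
      calc _ ≤ ‖B n * ((U n).starProjection - V.starProjection)‖ * ‖V.starProjection‖ :=
            norm_mul_le _ _
        _ ≤ ‖B n‖ * ‖(U n).starProjection - V.starProjection‖ * 1 := by
          gcongr
          exact norm_mul_le _ _
        _ ≤ Real.exp ((l + η / 16) * n) * (C * Real.exp (-(η / 2)) ^ n) * 1 := by gcongr
        _ = C * (Real.exp ((l + η / 16) * n) * Real.exp (-(η / 2)) ^ n) := by ring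
        _ = _ := by
          rw [← Real.exp_nat_mul, ← Real.exp_add]
          congr 2
          ring
    rw [show l - η + η / 2 = l - η / 2 by ring] at h2
    rw [e]
    have := norm_sub_le (B n * (U n).starProjection * V.starProjection)
      (B n * ((U n).starProjection - V.starProjection) * V.starProjection)
    linarith
  refine ⟨V, by omega, fun v hv ε hε => ?_, fun v hv => ?_, ?_⟩
  · have hlim : Tendsto (fun n => ‖v - (U n).starProjection v‖) atTop
        (𝓝 ‖v - V.starProjection v‖) :=
      (tendsto_const_nhds.sub (((ContinuousLinearMap.apply ℝ E v).continuous.tendsto _).comp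
        hP)).norm
    have hpos : 0 < ‖v - V.starProjection v‖ := by
      rw [norm_pos_iff, sub_ne_zero]
      exact fun h => hv (V.starProjection_eq_self_iff.mp h.symm)
    filter_upwards [hs_low (ε / 2) (by positivity), hlim.eventually (lt_mem_nhds
      (half_lt_self hpos)), eventually_mul_exp_le (‖v - V.starProjection v‖ / 2)⁻¹
      (show l - ε < l - ε / 2 by linarith)] with n h1 h2 h3
    rw [inv_mul_le_iff₀ (by positivity)] at h3
    calc _ ≤ _ := h3
      _ ≤ ‖v - (U n).starProjection v‖ * s n := by gcongr
      _ = s n * ‖v - (U n).starProjection v‖ := mul_comm _ _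
      _ ≤ _ := hs n v
  · filter_upwards [hBV, eventually_mul_exp_le ‖v‖
        (show l - 3 * η / 8 < l - η / 4 by linarith)] with n h1 h2
    calc ‖B n v‖ = ‖(B n * V.starProjection) v‖ := by
          rw [mul_apply_eq_comp, V.starProjection_eq_self_iff.mpr hv]
      _ ≤ ‖B n * V.starProjection‖ * ‖v‖ := ContinuousLinearMap.le_opNorm _ _
      _ ≤ Real.exp ((l - 3 * η / 8) * n) * ‖v‖ := by gcongr
      _ ≤ _ := by rwa [mul_comm]
  · rw [tendsto_iff_norm_sub_tendsto_zero]
    have hexp : Tendsto (fun n : ℕ => Real.exp (-(η / 8) * n)) atTop (𝓝 0) :=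
      Real.tendsto_exp_atBot.comp
        (tendsto_natCast_atTop_atTop.const_mul_atTop_of_neg (by linarith))
    have hlim : Tendsto (fun n : ℕ => Real.exp (-(η / 8) * n)
        + ‖(U n).starProjection - V.starProjection‖ + Real.exp (-(η / 8) * n)) atTop (𝓝 0) := by
      simpa using (hexp.add (tendsto_iff_norm_sub_tendsto_zero.mp hP)).add hexp
    refine squeeze_zero' (Eventually.of_forall fun _ => norm_nonneg _) ?_ hlim
    filter_upwards [hs_low (η / 8) (by positivity), hBV] with n h1 h2
    have hspos : 0 < s n := (Real.exp_pos _).trans_le h1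
    refine (norm_gramResolvent_sub_starProjection_le (Real.exp_pos _) hspos (hs n) V).trans ?_
    gcongr
    · rw [inv_le_comm₀ (by positivity) (Real.exp_pos _), ← Real.exp_neg]
      calc _ = Real.exp (-(l - η / 4) * n) * Real.exp ((l - η / 8) * n) := by
            rw [← Real.exp_add]
            congr 1
            ring
        _ ≤ _ := by gcongr
    · calc _ ≤ Real.exp (-(l - η / 4) * n) * Real.exp ((l - 3 * η / 8) * n) := by gcongr
        _ = _ := by
          rw [← Real.exp_add]
          congr 1
          ring

end Splitting

section Cocycle

open Module

theorem eventually_le_exp_of_tendsto_log_div {x : ℕ → ℝ} {L : EReal}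
    (h : Tendsto (fun n : ℕ => ((Real.log (x n) / n : ℝ) : EReal)) atTop (𝓝 L)) {c : ℝ}
    (hc : L < c) : ∀ᶠ n : ℕ in atTop, x n ≤ Real.exp (c * n) := by
  filter_upwards [h.eventually (gt_mem_nhds hc), eventually_gt_atTop 0] with n hn hn0
  have hn0' : (0 : ℝ) < n := by exact_mod_cast hn0
  rcases le_or_gt (x n) 0 with h0 | h0
  · exact h0.trans (Real.exp_pos _).le
  · rw [← Real.log_le_iff_le_exp h0, ← div_le_iff₀ hn0']
    exact (EReal.coe_lt_coe_iff.mp hn).le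

theorem eventually_exp_le_of_tendsto_log_div {x : ℕ → ℝ} (hx : ∀ n, 0 < x n) {L : EReal}
    (h : Tendsto (fun n : ℕ => ((Real.log (x n) / n : ℝ) : EReal)) atTop (𝓝 L)) {c : ℝ}
    (hc : c < L) : ∀ᶠ n : ℕ in atTop, Real.exp (c * n) ≤ x n := by
  filter_upwards [h.eventually (lt_mem_nhds hc), eventually_gt_atTop 0] with n hn hn0
  have hn0' : (0 : ℝ) < n := by exact_mod_cast hn0
  rw [← Real.le_log_iff_exp_le (hx n), ← le_div_iff₀ hn0']
  exact (EReal.coe_lt_coe_iff.mp hn).le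

theorem Submodule.finrank_map_of_injective {K V V' : Type*} [Field K] [AddCommGroup V] [Module K V]
    [AddCommGroup V'] [Module K V'] {f : V →ₗ[K] V'} (hf : Function.Injective f)
    (W : Submodule K V) : finrank K (W.map f) = finrank K W :=
  (W.equivMapOfInjective f hf).finrank_eq.symm

variable {Ω : Type*} {E : Type*} [NormedAddCommGroup E] [InnerProductSpace ℝ E]

/-- The iterates `a(T^{n-1} ω) ⋯ a(T ω) a(ω)` of a linear cocycle. -/
noncomputable def cocycleProd (T : Ω → Ω) (a : Ω → E →L[ℝ] E) : ℕ → Ω → E →L[ℝ] E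
  | 0, _ => 1
  | n + 1, ω => cocycleProd T a n (T ω) * a ω

theorem cocycleProd_add (T : Ω → Ω) (a : Ω → E →L[ℝ] E) (m n : ℕ) (ω : Ω) :
    cocycleProd T a (m + n) ω = cocycleProd T a n (T^[m] ω) * cocycleProd T a m ω := by
  induction m generalizing ω with
  | zero => simp [cocycleProd]
  | succ m ih =>
    rw [show m + 1 + n = (m + n) + 1 by ring, cocycleProd, ih, cocycleProd, mul_assoc,
      Function.iterate_succ_apply]

theorem cocycleProd_succ (T : Ω → Ω) (a : Ω → E →L[ℝ] E) (n : ℕ) (ω : Ω) :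
    cocycleProd T a (n + 1) ω = a (T^[n] ω) * cocycleProd T a n ω := by
  rw [cocycleProd_add]
  simp [cocycleProd]

theorem injective_cocycleProd (T : Ω → Ω) {a : Ω → E →L[ℝ] E}
    (hinj : ∀ ω, Function.Injective (a ω)) (n : ℕ) (ω : Ω) :
    Function.Injective (cocycleProd T a n ω) := by
  induction n generalizing ω with
  | zero => exact Function.injective_id
  | succ n ih => exact (ih (T ω)).comp (hinj ω)

theorem ae_norm_iterate_le_exp [MeasurableSpace Ω] {μ : Measure Ω} [IsProbabilityMeasure μ]
    {T : Ω → Ω} {a : Ω → E →L[ℝ] E} (hT : Ergodic T μ) (ha : Measurable a)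
    (hlog : Integrable (fun ω => max (Real.log ‖a ω‖) 0) μ) :
    ∀ᵐ ω ∂μ, ∀ ε > 0, ∀ᶠ n : ℕ in atTop, ‖a (T^[n] ω)‖ ≤ Real.exp (ε * n) := by
  filter_upwards [ae_tendsto_birkhoffSum_tail_div hT
    ((Real.measurable_log.comp ha.norm).max measurable_const) hlog 1] with ω hω ε hε
  filter_upwards [(tendsto_add_atTop_nat 1).eventually (hω.eventually (gt_mem_nhds
    (show (0 : ℝ) < ε / 2 by positivity))), eventually_ge_atTop 1] with n hn hn1
  have hn1' : (1 : ℝ) ≤ n := by exact_mod_cast hn1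
  rw [Nat.add_sub_cancel, Nat.Ico_succ_singleton, Finset.sum_singleton,
    div_lt_iff₀ (by positivity)] at hn
  push_cast at hn
  have h1 : Real.log ‖a (T^[n] ω)‖ ≤ ε * n := by
    have := le_max_left (Real.log ‖a (T^[n] ω)‖) 0
    simp only [Function.comp] at hn
    nlinarith
  rcases (norm_nonneg (a (T^[n] ω))).eq_or_lt with h | h
  · rw [← h]
    exact (Real.exp_pos _).le
  · exact (Real.log_le_iff_le_exp h).mp h1

variable [FiniteDimensional ℝ E]

/-- The iterates of a cocycle, restricted to a family of subspaces. -/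
noncomputable def restrictedProd (T : Ω → Ω) (a : Ω → E →L[ℝ] E) (W : Ω → Submodule ℝ E) (n : ℕ)
    (ω : Ω) : E →L[ℝ] E :=
  cocycleProd T a n ω * (W ω).starProjection

variable {T : Ω → Ω} {a : Ω → E →L[ℝ] E} {W : Ω → Submodule ℝ E}

theorem restrictedProd_apply {ω : Ω} {v : E} (hv : v ∈ W ω) (n : ℕ) :
    restrictedProd T a W n ω v = cocycleProd T a n ω v := by
  rw [restrictedProd, mul_apply_eq_comp, (W ω).starProjection_eq_self_iff.mpr hv]

theorem finrank_range_restrictedProd (hinj : ∀ ω, Function.Injective (a ω)) (n : ℕ) (ω : Ω) :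
    finrank ℝ (restrictedProd T a W n ω).range = finrank ℝ (W ω) := by
  have : (restrictedProd T a W n ω).range
      = (W ω).map (cocycleProd T a n ω).toLinearMap := by
    have h := LinearMap.range_comp (W ω).starProjection.toLinearMap
      (cocycleProd T a n ω).toLinearMap
    rwa [Submodule.range_starProjection] at h
  rw [this]
  exact Submodule.finrank_map_of_injective (injective_cocycleProd T hinj n ω) _

variable [MeasurableSpace Ω]

theorem measurable_cocycleProd {T : Ω → Ω} {a : Ω → E →L[ℝ] E} (hT : Measurable T)
    (ha : Measurable a) (n : ℕ) : Measurable (cocycleProd T a n) := by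
  induction n with
  | zero => exact measurable_const
  | succ n ih => exact (ih.comp hT).mul ha

/-- A measurable family of `r`-dimensional subspaces that is invariant under a cocycle. -/
structure IsInvariantFamily (μ : Measure Ω) (T : Ω → Ω) (a : Ω → E →L[ℝ] E) (r : ℕ)
    (W : Ω → Submodule ℝ E) : Prop where
  measurable : Measurable fun ω => (W ω).starProjection
  finrank_eq : ∀ᵐ ω ∂μ, finrank ℝ (W ω) = r
  map_eq : ∀ᵐ ω ∂μ, (W ω).map (a ω).toLinearMap = W (T ω)

variable {μ : Measure Ω} {r : ℕ}

theorem IsInvariantFamily.map_cocycleProd (hW : IsInvariantFamily μ T a r W)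
    (hT : MeasurePreserving T μ μ) :
    ∀ᵐ ω ∂μ, ∀ n, (W ω).map (cocycleProd T a n ω).toLinearMap = W (T^[n] ω) := by
  filter_upwards [ae_forall_iterate hT hW.map_eq] with ω hω n
  induction n with
  | zero => exact Submodule.map_id _
  | succ n ih =>
    rw [Function.iterate_succ_apply', ← hω n, ← ih, ← Submodule.map_comp, cocycleProd_succ]
    rfl

theorem IsInvariantFamily.restrictedProd_add (hW : IsInvariantFamily μ T a r W)
    (hT : MeasurePreserving T μ μ) :
    ∀ᵐ ω ∂μ, ∀ m n, restrictedProd T a W (m + n) ω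
      = restrictedProd T a W n (T^[m] ω) * restrictedProd T a W m ω := by
  filter_upwards [hW.map_cocycleProd hT] with ω hω m n
  ext v
  have h : cocycleProd T a m ω ((W ω).starProjection v) ∈ W (T^[m] ω) := by
    rw [← hω m]
    exact Submodule.mem_map_of_mem ((W ω).starProjection_apply_mem v)
  calc restrictedProd T a W (m + n) ω v
      = cocycleProd T a n (T^[m] ω) (cocycleProd T a m ω ((W ω).starProjection v)) := by
        rw [restrictedProd, cocycleProd_add]
        rfl
    _ = _ := (restrictedProd_apply h n).symm

theorem IsInvariantFamily.measurable_restrictedProd (hW : IsInvariantFamily μ T a r W)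
    (hT : Measurable T) (ha : Measurable a) (n : ℕ) : Measurable (restrictedProd T a W n) :=
  (measurable_cocycleProd hT ha n).mul hW.measurable

variable [IsProbabilityMeasure μ]

theorem IsInvariantFamily.exists_tendsto_log_volExp (hW : IsInvariantFamily μ T a r W)
    (hT : Ergodic T μ) (ha : Measurable a) (hinj : ∀ ω, Function.Injective (a ω))
    (hlog : Integrable (fun ω => max (Real.log ‖a ω‖) 0) μ) {q : ℕ} (hq : q ≤ r) :
    ∃ L : EReal, L ≠ ⊤ ∧ ∀ᵐ ω ∂μ, Tendsto (fun n : ℕ =>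
      ((Real.log (volExp q (restrictedProd T a W n ω)) / n : ℝ) : EReal)) atTop (𝓝 L) := by
  have hpos : ∀ᵐ ω ∂μ, ∀ n, 0 < volExp q (restrictedProd T a W n ω) := by
    filter_upwards [hW.finrank_eq] with ω hω n
    refine volExp_pos ?_
    rwa [finrank_range_restrictedProd hinj, hω]
  refine exists_ae_tendsto_subadditive (f := fun n ω => Real.log (volExp q
    (restrictedProd T a W n ω))) (g := fun ω => 2 * q * max (Real.log ‖a ω‖) 0) hT
    (fun n => ?_) ?_ ?_ ?_ (hlog.const_mul _) (fun ω => by positivity) ?_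
  · exact Real.measurable_log.comp ((measurable_volExp q).comp
      (hW.measurable_restrictedProd hT.measurable ha n))
  · filter_upwards [hW.restrictedProd_add hT.toMeasurePreserving,
      ae_forall_iterate hT.toMeasurePreserving hpos] with ω hω hpω m n
    have h1 : 0 < volExp q (restrictedProd T a W m ω) := hpω 0 m
    calc _ ≤ Real.log (volExp q (restrictedProd T a W n (T^[m] ω))
          * volExp q (restrictedProd T a W m ω)) := by
          refine Real.log_le_log (hpω 0 (m + n)) ?_
          rw [hω m n]
          exact volExp_mul_le q _ _
      _ = _ := by rw [Real.log_mul (hpω m n).ne' h1.ne', add_comm]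
  · filter_upwards [hpos] with ω hω
    refine Real.log_nonpos (hω 0).le ((volExp_le_norm_pow _ _).trans ?_)
    rw [restrictedProd, cocycleProd, one_mul]
    exact pow_le_one₀ (by positivity)
      (pow_le_one₀ (norm_nonneg _) (W ω).starProjection_norm_le)
  · exact ((Real.measurable_log.comp ha.norm).max measurable_const).const_mul _
  · filter_upwards [hpos] with ω hω
    have h1 : ‖restrictedProd T a W 1 ω‖ ≤ ‖a ω‖ := by
      have e : restrictedProd T a W 1 ω = a ω * (W ω).starProjection := by
        simp [restrictedProd, cocycleProd]
      rw [e]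
      refine (norm_mul_le _ _).trans (mul_le_of_le_one_right (norm_nonneg _) ?_)
      exact (W ω).starProjection_norm_le
    have h2 : volExp q (restrictedProd T a W 1 ω) ≤ (‖a ω‖ ^ 2) ^ q :=
      (volExp_le_norm_pow _ _).trans (by gcongr)
    calc _ ≤ Real.log ((‖a ω‖ ^ 2) ^ q) := Real.log_le_log (hω 1) h2
      _ = 2 * q * Real.log ‖a ω‖ := by
        rw [Real.log_pow, Real.log_pow]
        push_cast
        ring
      _ ≤ _ := by
        gcongr
        exact le_max_left _ _

end Cocycle

section SlowFamily

open Module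

variable {E : Type*} [NormedAddCommGroup E] [InnerProductSpace ℝ E] [FiniteDimensional ℝ E]

theorem starProjection_inf_of_orthogonal_le {U W : Submodule ℝ E} (h : Wᗮ ≤ U) :
    (U ⊓ W).starProjection = W.starProjection + U.starProjection - 1 := by
  have h' : Uᗮ ≤ W := by
    have := Submodule.orthogonal_le h
    rwa [Submodule.orthogonal_orthogonal] at this
  ext v
  have hW : v - W.starProjection v ∈ Wᗮ := Submodule.sub_starProjection_mem_orthogonal v
  have hU : v - U.starProjection v ∈ Uᗮ := Submodule.sub_starProjection_mem_orthogonal v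
  have e : (W.starProjection + U.starProjection - 1) v
      = W.starProjection v + U.starProjection v - v := rfl
  rw [e]
  refine Submodule.eq_starProjection_of_mem_orthogonal ⟨?_, ?_⟩ ?_
  · have := U.sub_mem (U.starProjection_apply_mem v) (h hW)
    change _ ∈ U
    convert this using 1
    abel
  · have := W.sub_mem (W.starProjection_apply_mem v) (h' hU)
    change _ ∈ W
    convert this using 1
    abel
  · have := (U ⊓ W)ᗮ.add_mem (Submodule.orthogonal_le inf_le_right hW)
      (Submodule.orthogonal_le inf_le_left hU)
    convert this using 1
    abel

theorem finrank_inf_add_of_orthogonal_le {U W : Submodule ℝ E} (h : Wᗮ ≤ U) :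
    finrank ℝ (U ⊓ W : Submodule ℝ E) + finrank ℝ E = finrank ℝ U + finrank ℝ W := by
  have htop : U ⊔ W = ⊤ := by
    rw [eq_top_iff, ← W.sup_orthogonal_of_hasOrthogonalProjection, sup_comm U]
    gcongr
  have := Submodule.finrank_sup_add_finrank_inf_eq U W
  rw [htop, finrank_top] at this
  omega

theorem norm_le_exp_of_volExp_one_le {X : E →L[ℝ] E} {c : ℝ} (h : volExp 1 X ≤ Real.exp (2 * c)) :
    ‖X‖ ≤ Real.exp c := by
  refine le_of_sq_le_sq (((norm_sq_le_volExp_one X).trans h).trans_eq ?_) (Real.exp_pos _).le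
  rw [← Real.exp_nat_mul]
  norm_num

theorem tendsto_log_norm_div_bot_of_volExp_one {B : ℕ → E →L[ℝ] E}
    (h : Tendsto (fun n : ℕ => ((Real.log (volExp 1 (B n)) / n : ℝ) : EReal)) atTop (𝓝 ⊥))
    {v : E} (hv : ∀ n, B n v ≠ 0) :
    Tendsto (fun n : ℕ => ((Real.log ‖B n v‖ / n : ℝ) : EReal)) atTop (𝓝 ⊥) := by
  rw [EReal.tendsto_nhds_bot_iff_real]
  intro x
  filter_upwards [eventually_le_exp_of_tendsto_log_div h (EReal.bot_lt_coe (2 * (x - 2))),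
    eventually_mul_exp_le ‖v‖ (show x - 2 < x - 1 by linarith), eventually_gt_atTop 0]
    with n h1 h2 h3
  have h3' : (0 : ℝ) < n := by exact_mod_cast h3
  rw [mul_assoc] at h1
  have h4 : ‖B n v‖ ≤ Real.exp ((x - 1) * n) :=
    calc ‖B n v‖ ≤ ‖B n‖ * ‖v‖ := (B n).le_opNorm v
      _ ≤ Real.exp ((x - 2) * n) * ‖v‖ := by
        gcongr
        exact norm_le_exp_of_volExp_one_le h1
      _ ≤ _ := by rwa [mul_comm]
  rw [EReal.coe_lt_coe_iff]
  rw [← Real.log_le_iff_le_exp (norm_pos_iff.mpr (hv n)), ← div_le_iff₀ h3'] at h4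
  linarith

variable {Ω : Type*} [MeasurableSpace Ω] {μ : Measure Ω}

theorem exists_measurable_starProjection_ae_eq {W : Ω → Submodule ℝ E}
    (hW : AEMeasurable (fun ω => (W ω).starProjection) μ) :
    ∃ W' : Ω → Submodule ℝ E, Measurable (fun ω => (W' ω).starProjection) ∧ W' =ᵐ[μ] W := by
  classical
  set N := toMeasurable μ {ω | (W ω).starProjection = hW.mk _ ω}ᶜ with hN
  have hN0 : μ N = 0 := by
    rw [hN, measure_toMeasurable]
    exact hW.ae_eq_mk
  have hNm : MeasurableSet N := measurableSet_toMeasurable _ _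
  refine ⟨N.piecewise (fun _ => ⊥) W, ?_, ?_⟩
  · have : (fun ω => (N.piecewise (fun _ => ⊥) W ω).starProjection)
        = N.piecewise (fun _ => 0) (hW.mk _) := by
      ext1 ω
      by_cases h : ω ∈ N
      · simp [h]
      · have h' : (W ω).starProjection = hW.mk _ ω := by
          by_contra hne
          exact h (subset_toMeasurable _ _ hne)
        simp [h, h']
    rw [this]
    exact Measurable.piecewise hNm measurable_const hW.measurable_mk
  · have : ∀ᵐ ω ∂μ, ω ∉ N := measure_eq_zero_iff_ae_notMem.mp hN0
    filter_upwards [this] with ω hω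
    simp [hω]

variable {T : Ω → Ω} {a : Ω → E →L[ℝ] E}

theorem isInvariantFamily_bot : IsInvariantFamily μ T a 0 fun _ => ⊥ where
  measurable := measurable_const
  finrank_eq := by simp
  map_eq := by simp

variable [IsProbabilityMeasure μ] {r : ℕ} {W : Ω → Submodule ℝ E}

theorem IsInvariantFamily.exists_slow_family (hW : IsInvariantFamily μ T a r W)
    (hT : Ergodic T μ) (ha : Measurable a) (hinj : ∀ ω, Function.Injective (a ω))
    (hlog : Integrable (fun ω => max (Real.log ‖a ω‖) 0) μ) {p : ℕ} (hp : 1 ≤ p) (hpr : p ≤ r)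
    {l η : ℝ} (hη : 0 < η)
    (hB : ∀ᵐ ω ∂μ, ∀ ε > 0, ∀ᶠ n : ℕ in atTop,
      ‖restrictedProd T a W n ω‖ ≤ Real.exp ((l + ε) * n))
    (hlow : ∀ᵐ ω ∂μ, ∀ ε > 0, ∀ᶠ n : ℕ in atTop,
      Real.exp ((2 * p * l - ε) * n) ≤ volExp p (restrictedProd T a W n ω))
    (hup : ∀ᵐ ω ∂μ, ∀ᶠ n : ℕ in atTop, volExp (p + 1) (restrictedProd T a W n ω)
      ≤ Real.exp ((2 * (p + 1) * l - 2 * η) * n)) :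
    ∃ W' : Ω → Submodule ℝ E, IsInvariantFamily μ T a (r - p) W' ∧ (∀ᵐ ω ∂μ, W' ω ≤ W ω) ∧
      (∀ᵐ ω ∂μ, ∀ v ∈ W ω, v ∉ W' ω →
        Tendsto (fun n : ℕ => Real.log ‖cocycleProd T a n ω v‖ / n) atTop (𝓝 l)) ∧
      ∀ᵐ ω ∂μ, ∀ v ∈ W' ω, ∀ᶠ n : ℕ in atTop,
        ‖cocycleProd T a n ω v‖ ≤ Real.exp ((l - η / 4) * n) := by
  have hex : ∀ᵐ ω ∂μ, ∃ U : Submodule ℝ E, finrank ℝ U + p = finrank ℝ E ∧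
      (∀ v ∉ U, ∀ ε > 0, ∀ᶠ n : ℕ in atTop,
        Real.exp ((l - ε) * n) ≤ ‖restrictedProd T a W n ω v‖) ∧
      (∀ v ∈ U, ∀ᶠ n : ℕ in atTop,
        ‖restrictedProd T a W n ω v‖ ≤ Real.exp ((l - η / 4) * n)) ∧
      Tendsto (fun n : ℕ => gramResolvent (Real.exp (-(l - η / 4) * n))
        (restrictedProd T a W n ω)) atTop (𝓝 U.starProjection) := by
    filter_upwards [hB, hlow, hup, hW.finrank_eq, ae_norm_iterate_le_exp hT ha hlog]
      with ω h1 h2 h3 h4 h5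
    refine exists_slow_submodule (a := fun n => a (T^[n] ω)) (fun n => ?_) hp ?_ hη h5 h1 h2 h3
    · rw [restrictedProd, cocycleProd_succ, mul_assoc, restrictedProd]
    · exact hpr.trans (h4 ▸ (W ω).finrank_le)
  obtain ⟨U, hU⟩ := hex.choice
  have hort : ∀ᵐ ω ∂μ, (W ω)ᗮ ≤ U ω := by
    filter_upwards [hU] with ω h v hv
    by_contra hvU
    obtain ⟨n, hn⟩ := (h.2.1 v hvU 1 one_pos).exists
    have : restrictedProd T a W n ω v = 0 := by
      rw [restrictedProd, mul_apply_eq_comp, (W ω).starProjection_apply_eq_zero_iff.mpr hv,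
        map_zero]
    rw [this, norm_zero] at hn
    exact absurd hn (not_le.mpr (Real.exp_pos _))
  have hUm : AEMeasurable (fun ω => (U ω).starProjection) μ := by
    refine aemeasurable_of_tendsto_metrizable_ae atTop (fun n => ?_) (hU.mono fun ω h => h.2.2.2)
    exact ((continuous_gramResolvent _).measurable.comp
      (hW.measurable_restrictedProd hT.measurable ha n)).aemeasurable
  have hm : AEMeasurable (fun ω => (U ω ⊓ W ω).starProjection) μ := by
    refine ((hW.measurable.aemeasurable.add hUm).sub_const 1).congr ?_
    filter_upwards [hort] with ω h
    exact (starProjection_inf_of_orthogonal_le h).symm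
  obtain ⟨W', hW'm, hW'⟩ := exists_measurable_starProjection_ae_eq hm
  have hr : ∀ᵐ ω ∂μ, finrank ℝ (W' ω) = r - p := by
    filter_upwards [hW', hort, hU, hW.finrank_eq] with ω h1 h2 h3 h4
    rw [h1]
    have := finrank_inf_add_of_orthogonal_le h2
    have := h3.1
    omega
  refine ⟨W', ⟨hW'm, hr, ?_⟩, ?_, ?_, ?_⟩
  · filter_upwards [hW', hT.quasiMeasurePreserving.ae hW', hr,
      hT.quasiMeasurePreserving.ae hr, hU, hT.quasiMeasurePreserving.ae hU, hW.map_eq]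
      with ω h1 h1' h2 h2' h3 h3' h4
    refine Submodule.eq_of_le_of_finrank_eq ?_ ?_
    · rintro _ ⟨v, hv, rfl⟩
      change a ω v ∈ _
      rw [SetLike.mem_coe, h1] at hv
      rw [h1']
      have hav : a ω v ∈ W (T ω) := h4 ▸ Submodule.mem_map_of_mem hv.2
      refine ⟨?_, hav⟩
      by_contra hnot
      obtain ⟨n, hn1, hn2, hn3⟩ := ((h3'.2.1 _ hnot (η / 8) (by positivity)).and
        (((tendsto_add_atTop_nat 1).eventually (h3.2.2.1 v hv.1)).and (eventually_mul_exp_le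
          (2 * Real.exp (l - η / 4)) (show l - η / 4 < l - η / 8 by linarith)))).exists
      rw [restrictedProd_apply hav] at hn1
      rw [restrictedProd_apply hv.2, cocycleProd] at hn2
      have h5 : Real.exp ((l - η / 8) * n) ≤ Real.exp ((l - η / 4) * ((n + 1 : ℕ) : ℝ)) :=
        hn1.trans hn2
      have h6 : Real.exp ((l - η / 4) * ((n + 1 : ℕ) : ℝ))
          = Real.exp (l - η / 4) * Real.exp ((l - η / 4) * n) := by
        rw [← Real.exp_add]
        congr 1
        push_cast
        ring
      have h7 : 0 < Real.exp (l - η / 4) * Real.exp ((l - η / 4) * n) := by positivity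
      linarith
    · rw [Submodule.finrank_map_of_injective (hinj ω), h2, h2']
  · filter_upwards [hW'] with ω h
    rw [h]
    exact inf_le_right
  · filter_upwards [hW', hU, hB] with ω h1 h2 h3 v hv hv'
    rw [h1] at hv'
    have hvU : v ∉ U ω := fun h => hv' ⟨h, hv⟩
    refine tendsto_log_norm_div (fun ε hε => ?_) fun ε hε => ?_
    · filter_upwards [h2.2.1 v hvU ε hε] with n hn
      rwa [restrictedProd_apply hv] at hn
    · filter_upwards [h3 (ε / 2) (by positivity), eventually_mul_exp_le ‖v‖
        (show l + ε / 2 < l + ε by linarith)] with n hn1 hn2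
      rw [← restrictedProd_apply hv]
      calc _ ≤ ‖restrictedProd T a W n ω‖ * ‖v‖ := ContinuousLinearMap.le_opNorm _ v
        _ ≤ Real.exp ((l + ε / 2) * n) * ‖v‖ := by gcongr
        _ ≤ _ := by rwa [mul_comm]
  · filter_upwards [hW', hU] with ω h1 h2 v hv
    rw [h1] at hv
    filter_upwards [h2.2.2.1 v hv.1] with n hn
    rwa [restrictedProd_apply hv.2] at hn

/-- The subfamily of an invariant family that consists of all vectors of non-maximal growth. -/
theorem IsInvariantFamily.exists_next_family (hW : IsInvariantFamily μ T a r W)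
    (hT : Ergodic T μ) (ha : Measurable a) (hinj : ∀ ω, Function.Injective (a ω))
    (hlog : Integrable (fun ω => max (Real.log ‖a ω‖) 0) μ) (hr : 1 ≤ r) :
    ∃ (l : EReal) (r' : ℕ) (W' : Ω → Submodule ℝ E), l ≠ ⊤ ∧ r' < r ∧
      IsInvariantFamily μ T a r' W' ∧ (∀ᵐ ω ∂μ, W' ω ≤ W ω) ∧
      (∀ᵐ ω ∂μ, ∀ v ∈ W ω, v ∉ W' ω → Tendsto (fun n : ℕ =>
        ((Real.log ‖cocycleProd T a n ω v‖ / n : ℝ) : EReal)) atTop (𝓝 l)) ∧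
      (r' = 0 ∨ ∃ κ : ℝ, (κ : EReal) < l ∧ ∀ᵐ ω ∂μ, ∀ v ∈ W' ω, ∀ᶠ n : ℕ in atTop,
        ‖cocycleProd T a n ω v‖ ≤ Real.exp (κ * n)) := by
  have hL : ∀ q, ∃ L : EReal, q ≤ r → L ≠ ⊤ ∧ ∀ᵐ ω ∂μ, Tendsto (fun n : ℕ =>
      ((Real.log (volExp q (restrictedProd T a W n ω)) / n : ℝ) : EReal)) atTop (𝓝 L) := by
    intro q
    by_cases hq : q ≤ r
    · obtain ⟨L, h⟩ := hW.exists_tendsto_log_volExp hT ha hinj hlog hq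
      exact ⟨L, fun _ => h⟩
    · exact ⟨0, fun h => absurd h hq⟩
  choose L hL using hL
  rcases eq_or_ne (L 1) ⊥ with hbot | hbot
  · refine ⟨⊥, 0, fun _ => ⊥, bot_ne_top, hr, isInvariantFamily_bot,
      Eventually.of_forall fun _ => bot_le, ?_, Or.inl rfl⟩
    have h1 := (hL 1 hr).2
    rw [hbot] at h1
    filter_upwards [h1] with ω hω v hv hv0
    have e : ∀ n, restrictedProd T a W n ω v = cocycleProd T a n ω v := restrictedProd_apply hv
    have := tendsto_log_norm_div_bot_of_volExp_one hω (v := v) fun n => by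
      rw [e, ← map_zero (cocycleProd T a n ω)]
      exact (injective_cocycleProd T hinj n ω).ne hv0
    simpa only [e] using this
  · obtain ⟨l, hl⟩ : ∃ l : ℝ, L 1 = ((2 * l : ℝ) : EReal) :=
      ⟨(L 1).toReal / 2, by rw [mul_div_cancel₀ _ two_ne_zero, EReal.coe_toReal (hL 1 hr).1 hbot]⟩
    classical
    set p := Nat.findGreatest (fun q => ((2 * q * l : ℝ) : EReal) ≤ L q) r with hpdef
    have hp1 : 1 ≤ p := Nat.le_findGreatest hr (by simp [hl])
    have hpr : p ≤ r := Nat.findGreatest_le r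
    have hpL : ((2 * p * l : ℝ) : EReal) ≤ L p :=
      Nat.findGreatest_spec (P := fun q => ((2 * q * l : ℝ) : EReal) ≤ L q) hr (by simp [hl])
    have hB : ∀ᵐ ω ∂μ, ∀ ε > 0, ∀ᶠ n : ℕ in atTop,
        ‖restrictedProd T a W n ω‖ ≤ Real.exp ((l + ε) * n) := by
      filter_upwards [(hL 1 hr).2] with ω hω ε hε
      rw [hl] at hω
      filter_upwards [eventually_le_exp_of_tendsto_log_div hω (c := 2 * (l + ε))
        (EReal.coe_lt_coe_iff.mpr (by linarith))] with n hn
      rw [mul_assoc] at hn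
      exact norm_le_exp_of_volExp_one_le hn
    have hlow : ∀ᵐ ω ∂μ, ∀ ε > 0, ∀ᶠ n : ℕ in atTop,
        Real.exp ((2 * p * l - ε) * n) ≤ volExp p (restrictedProd T a W n ω) := by
      filter_upwards [(hL p hpr).2, hW.finrank_eq] with ω hω hfin ε hε
      refine eventually_exp_le_of_tendsto_log_div (fun n => volExp_pos ?_) hω
        ((EReal.coe_lt_coe_iff.mpr (by linarith)).trans_le hpL)
      rwa [finrank_range_restrictedProd hinj, hfin]
    obtain ⟨η, hη, hup⟩ : ∃ η > 0, ∀ᵐ ω ∂μ, ∀ᶠ n : ℕ in atTop,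
        volExp (p + 1) (restrictedProd T a W n ω)
          ≤ Real.exp ((2 * (p + 1) * l - 2 * η) * n) := by
      rcases hpr.eq_or_lt with hpr' | hpr'
      · refine ⟨1, one_pos, ?_⟩
        filter_upwards [hW.finrank_eq] with ω hfin
        refine Eventually.of_forall fun n => ?_
        rw [volExp_eq_zero (by rw [finrank_range_restrictedProd hinj, hfin]; omega)]
        exact (Real.exp_pos _).le
      · have hlt : L (p + 1) < ((2 * (p + 1 : ℕ) * l : ℝ) : EReal) :=
          not_le.mp (Nat.findGreatest_is_greatest (Nat.lt_succ_self p) hpr')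
        obtain ⟨x, hx1, hx2⟩ := EReal.lt_iff_exists_real_btwn.mp hlt
        rw [EReal.coe_lt_coe_iff] at hx2
        push_cast at hx2
        refine ⟨(2 * (p + 1) * l - x) / 2, by linarith, ?_⟩
        filter_upwards [(hL (p + 1) hpr').2] with ω hω
        have := eventually_le_exp_of_tendsto_log_div hω hx1
        rwa [show 2 * ((p : ℝ) + 1) * l - 2 * ((2 * (p + 1) * l - x) / 2) = x by ring]
    obtain ⟨W', hinv, hle, hlim, hslow⟩ :=
      hW.exists_slow_family hT ha hinj hlog hp1 hpr hη hB hlow hup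
    refine ⟨l, r - p, W', EReal.coe_ne_top l, by omega, hinv, hle, ?_, Or.inr ⟨l - η / 4, ?_,
      hslow⟩⟩
    · filter_upwards [hlim] with ω hω v hv hv'
      exact (continuous_coe_real_ereal.tendsto l).comp (hω v hv hv')
    · exact EReal.coe_lt_coe_iff.mpr (by linarith)

end SlowFamily

section Filtration

open Module

variable {E : Type*} [NormedAddCommGroup E] [InnerProductSpace ℝ E] [FiniteDimensional ℝ E]
  {Ω : Type*} [MeasurableSpace Ω] {μ : Measure Ω}
  {T : Ω → Ω} {a : Ω → E →L[ℝ] E}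

theorem isInvariantFamily_top (hinj : ∀ ω, Function.Injective (a ω)) :
    IsInvariantFamily μ T a (finrank ℝ E) fun _ => ⊤ where
  measurable := measurable_const
  finrank_eq := by simp
  map_eq := Eventually.of_forall fun ω => by
    rw [Submodule.map_top, LinearMap.range_eq_top]
    exact LinearMap.surjective_of_injective (hinj ω)

variable [IsProbabilityMeasure μ] {r : ℕ} {W : Ω → Submodule ℝ E}

/-- An invariant family of subspaces carries a filtration by rates of exponential growth. -/
theorem IsInvariantFamily.exists_filtration (hW : IsInvariantFamily μ T a r W)
    (hT : Ergodic T μ) (ha : Measurable a) (hinj : ∀ ω, Function.Injective (a ω))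
    (hlog : Integrable (fun ω => max (Real.log ‖a ω‖) 0) μ) :
    ∃ (k : ℕ) (lam : Fin k → EReal) (V : Fin (k + 1) → Ω → Submodule ℝ E),
      StrictAnti lam ∧ (∀ i, lam i ≠ ⊤) ∧ V 0 = W ∧
      (∀ i, Measurable fun ω => (V i ω).starProjection) ∧
      ∀ᵐ ω ∂μ, V (Fin.last k) ω = ⊥ ∧ (∀ i : Fin k, V i.succ ω < V i.castSucc ω) ∧
        (∀ i, (V i ω).map (a ω).toLinearMap = V i (T ω)) ∧
        ∀ i : Fin k, ∀ v ∈ V i.castSucc ω, v ∉ V i.succ ω → Tendsto (fun n : ℕ =>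
          ((Real.log ‖cocycleProd T a n ω v‖ / n : ℝ) : EReal)) atTop (𝓝 (lam i)) := by
  induction r using Nat.strong_induction_on generalizing W with
  | _ r ih =>
  rcases Nat.eq_zero_or_pos r with rfl | hr
  · refine ⟨0, Fin.elim0, fun _ => W, fun i => i.elim0, fun i => i.elim0, rfl,
      fun _ => hW.measurable, ?_⟩
    filter_upwards [hW.finrank_eq, hW.map_eq] with ω h0 h1
    exact ⟨Submodule.finrank_eq_zero.mp h0, fun i => i.elim0, fun _ => h1, fun i => i.elim0⟩
  obtain ⟨l, r', W', hl, hr', hW', hle, hlim, hgap⟩ := hW.exists_next_family hT ha hinj hlog hr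
  obtain ⟨k, lam, V, hanti, htop, hV0, hmeas, hV⟩ := ih r' hr' hW'
  have hlt : ∀ i, lam i < l := by
    intro i
    have : NeZero k := ⟨(Nat.zero_lt_of_lt i.2).ne'⟩
    refine (hanti.antitone (Fin.zero_le i)).trans_lt ?_
    rcases hgap with rfl | ⟨κ, hκ, hslow⟩
    · obtain ⟨ω, h1, h2⟩ := (hV.and hW'.finrank_eq).exists
      have h3 := h1.2.1 0
      rw [Fin.castSucc_zero', hV0, Submodule.finrank_eq_zero.mp h2] at h3
      exact absurd h3 not_lt_bot
    · obtain ⟨ω, h1, h2⟩ := (hV.and hslow).exists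
      obtain ⟨v, hv, hv'⟩ := SetLike.exists_of_lt (h1.2.1 0)
      refine lt_of_le_of_lt (le_of_tendsto (h1.2.2.2 0 v hv hv') ?_) hκ
      rw [Fin.castSucc_zero', hV0] at hv
      filter_upwards [h2 v hv, eventually_gt_atTop 0] with n hn hn0
      have hv0 : v ≠ 0 := fun h => hv' (h ▸ zero_mem _)
      have hpos : 0 < ‖cocycleProd T a n ω v‖ := by
        rw [norm_pos_iff, ← map_zero (cocycleProd T a n ω)]
        exact (injective_cocycleProd T hinj n ω).ne hv0
      rw [EReal.coe_le_coe_iff, div_le_iff₀ (by exact_mod_cast hn0), Real.log_le_iff_le_exp hpos]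
      exact hn
  refine ⟨k + 1, Fin.cons l lam, Fin.cons W V, ?_, ?_, Fin.cons_zero .., ?_, ?_⟩
  · intro i j hij
    induction j using Fin.cases with
    | zero => exact absurd hij (Fin.not_lt_zero i)
    | succ j =>
      induction i using Fin.cases with
      | zero => simpa using hlt j
      | succ i => simpa using hanti (Fin.succ_lt_succ_iff.mp hij)
  · exact Fin.cases (by simpa using hl) (by simpa using htop)
  · exact Fin.cases (by simpa using hW.measurable) (by simpa using hmeas)
  · filter_upwards [hV, hle, hlim, hW.finrank_eq, hW'.finrank_eq, hW.map_eq] with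
      ω ⟨hlast, hstrict, hmap, hrate⟩ hsub hfast hdim hdim' hmapW
    refine ⟨?_, ?_, ?_, ?_⟩
    · rw [← Fin.succ_last, Fin.cons_succ, hlast]
    · refine Fin.cases ?_ fun i => ?_
      · rw [Fin.cons_succ, Fin.castSucc_zero, Fin.cons_zero, hV0]
        refine lt_of_le_of_ne hsub fun h => ?_
        rw [h] at hdim'
        omega
      · simpa [← Fin.succ_castSucc] using hstrict i
    · exact Fin.cases (by simpa using hmapW) (by simpa using hmap)
    · refine Fin.cases ?_ fun i => ?_
      · simpa [hV0] using hfast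
      · simpa [← Fin.succ_castSucc] using hrate i

end Filtration

theorem measurableSet_mem_of_measurable_starProjection {E : Type*} [NormedAddCommGroup E]
    [InnerProductSpace ℝ E] [FiniteDimensional ℝ E] [MeasurableSpace E] [BorelSpace E]
    {Ω : Type*} [MeasurableSpace Ω] {W : Ω → Submodule ℝ E}
    (hW : Measurable fun ω => (W ω).starProjection) :
    MeasurableSet {p : Ω × E | p.2 ∈ W p.1} := by
  have h : Measurable fun p : Ω × E => (W p.1).starProjection p.2 :=
    isBoundedBilinearMap_apply.continuous.measurable.comp
      ((hW.comp measurable_fst).prodMk measurable_snd)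
  simpa only [Submodule.starProjection_eq_self_iff] using measurableSet_eq_fun h measurable_snd


theorem measurable_toEuclideanCLM {Ω : Type*} [MeasurableSpace Ω] {d : ℕ}
    {M : Ω → Matrix (Fin d) (Fin d) ℝ} (hM : ∀ i j, Measurable fun ω => M ω i j) :
    Measurable fun ω => Matrix.toEuclideanCLM (𝕜 := ℝ) (M ω) := by
  have h : Continuous fun N : Fin d → Fin d → ℝ =>
      Matrix.toEuclideanCLM (n := Fin d) (𝕜 := ℝ) (Matrix.of N) :=
    LinearMap.continuous_of_finiteDimensional
      ((Matrix.toEuclideanCLM (n := Fin d) (𝕜 := ℝ)).toAlgEquiv.toLinearMap ∘ₗ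
        (Matrix.ofLinearEquiv ℝ).toLinearMap)
  exact h.measurable.comp (measurable_pi_iff.mpr fun i => measurable_pi_iff.mpr fun j => hM i j)

theorem cocycleProd_toEuclideanCLM {Ω : Type*} {d : ℕ} (T : Ω → Ω)
    (A : Ω → Matrix (Fin d) (Fin d) ℝ) (n : ℕ) (ω : Ω) :
    cocycleProd T (fun ω => Matrix.toEuclideanCLM (𝕜 := ℝ) (A ω)) n ω =
      Matrix.toEuclideanCLM (𝕜 := ℝ) (cocycIter T A n ω) := by
  induction n generalizing ω with
  | zero => exact (map_one _).symm
  | succ n ih => rw [cocycleProd, ih, cocycIter, map_mul]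

/-- **Oseledets Multiplicative Ergodic Theorem.** -/
theorem oseledets_multiplicative_ergodic_theorem
    {Ω : Type*} [MeasurableSpace Ω] {μ : Measure Ω} [IsProbabilityMeasure μ]
    {T : Ω → Ω} (hT : Ergodic T μ) {d : ℕ} (hd : 0 < d)
    (A : Ω → Matrix.GeneralLinearGroup (Fin d) ℝ)
    (hAmeas : ∀ i j, Measurable fun ω => (A ω : Matrix (Fin d) (Fin d) ℝ) i j)
    (hint : Integrable (fun ω =>
      max (Real.log (matOpNorm (A ω : Matrix (Fin d) (Fin d) ℝ))) 0) μ) :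
    ∃ (k : ℕ), 1 ≤ k ∧
    ∃ (lam : Fin k → EReal),
      StrictAnti lam ∧ (∀ i, lam i ≠ ⊤) ∧
      (∀ i : Fin k, (i : ℕ) + 1 < k → lam i ≠ ⊥) ∧
      ∃ V : Fin (k + 1) → Ω → Submodule ℝ (EuclideanSpace ℝ (Fin d)),
        (∀ i : Fin (k + 1),
          MeasurableSet {p : Ω × EuclideanSpace ℝ (Fin d) | p.2 ∈ V i p.1}) ∧
        ∀ᵐ ω ∂μ,
          V 0 ω = ⊤ ∧ V (Fin.last k) ω = ⊥ ∧
          (∀ i : Fin k, V i.succ ω < V i.castSucc ω) ∧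
          (∀ i : Fin (k + 1),
            (V i ω).map (Matrix.toEuclideanLin (A ω : Matrix (Fin d) (Fin d) ℝ)) = V i (T ω)) ∧
          (∀ i : Fin k, ∀ v ∈ V i.castSucc ω, v ∉ V i.succ ω →
            Tendsto
              (fun N : ℕ =>
                ((Real.log ‖Matrix.toEuclideanLin (cocycIter T (fun ω' =>
                    (A ω' : Matrix (Fin d) (Fin d) ℝ)) N ω) v‖ / (N : ℝ) : ℝ) : EReal))
              atTop (𝓝 (lam i))) := by
  set a : Ω → EuclideanSpace ℝ (Fin d) →L[ℝ] EuclideanSpace ℝ (Fin d) := fun ω =>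
    Matrix.toEuclideanCLM (𝕜 := ℝ) (A ω : Matrix (Fin d) (Fin d) ℝ) with ha
  have hinj : ∀ ω, Function.Injective (a ω) := fun ω =>
    Function.LeftInverse.injective
      (g := Matrix.toEuclideanCLM (𝕜 := ℝ) ((A ω)⁻¹ : Matrix.GeneralLinearGroup (Fin d) ℝ).val)
      fun v => by
        rw [ha, ← mul_apply_eq_comp, ← map_mul, Units.inv_mul, map_one, one_apply_eq_self]
  obtain ⟨k, lam, V, hanti, htop, hV0, hmeas, hV⟩ :=
    (isInvariantFamily_top (μ := μ) (T := T) hinj).exists_filtration hT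
      (measurable_toEuclideanCLM hAmeas) hinj hint
  refine ⟨k, ?_, lam, hanti, htop, ?_, V,
    fun i => measurableSet_mem_of_measurable_starProjection (hmeas i), ?_⟩
  · rw [Nat.one_le_iff_ne_zero]
    rintro rfl
    obtain ⟨ω, hω⟩ := hV.exists
    have h : (⊤ : Submodule ℝ (EuclideanSpace ℝ (Fin d))) = ⊥ := by
      rw [← hω.1, show Fin.last 0 = 0 from rfl, hV0]
    have : Nonempty (Fin d) := ⟨⟨0, hd⟩⟩
    exact top_ne_bot h
  · intro i hi
    exact ne_bot_of_gt (hanti (show i < ⟨i + 1, hi⟩ from Fin.lt_def.mpr (Nat.lt_succ_self _)))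
  · filter_upwards [hV] with ω ⟨hlast, hstrict, hmap, hrate⟩
    refine ⟨by rw [hV0], hlast, hstrict, hmap, fun i v hv hv' => ?_⟩
    have h := hrate i v hv hv'
    simp only [ha, cocycleProd_toEuclideanCLM] at h
    exact h
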